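/- Under assumptions (A1), (A2), (A3), the estimator ζ̂_{a,n} = n^{-1} Σ_{s=1}^n Θ²(P̃_{X|Y_s,Z_s}, P̃_{X|Z_s}) a(Y_s,Z_s) converges in probability to ζ_a(X,Y|Z) as n → ∞; that is, ζ̂_{a,n} is a consistent estimator of the conditional ball divergence. -/

import Mathlib

open MeasureTheory ProbabilityTheory Filter
open scoped ENNReal NNReal Topology

noncomputable section

/-- `ℝ^d` with the Euclidean norm. -/
abbrev Euc (d : ℕ) : Type := EuclideanSpace ℝ (Fin d)

/-- The ball divergence `Θ²(P, Q)` between two Borel measures on `ℝ^d`: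
`∫∫ ((P - Q)(B̄(u, ‖v - u‖)))² [dP(u)dP(v) + dQ(u)dQ(v)]`. -/
def ballDiv {d : ℕ} (P Q : Measure (Euc d)) : ℝ :=
  (∫ u, ∫ v, ((P (Metric.closedBall u (dist v u))).toReal
      - (Q (Metric.closedBall u (dist v u))).toReal) ^ 2 ∂P ∂P)
  + (∫ u, ∫ v, ((P (Metric.closedBall u (dist v u))).toReal
      - (Q (Metric.closedBall u (dist v u))).toReal) ^ 2 ∂Q ∂Q)

/-- Assumption (A2): the kernel `K` is bounded, nonnegative, symmetric about zero, compactly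
supported, integrates (as `u ↦ K ‖u‖` on `ℝ^d`) to one and has a scalar second moment matrix. -/
def KernelAssumption (K : ℝ → ℝ) (d : ℕ) : Prop :=
  (∀ t, 0 ≤ K t) ∧ (∃ C : ℝ, ∀ t, K t ≤ C) ∧ (∀ t, K (-t) = K t) ∧
  (∃ R : ℝ, 0 < R ∧ ∀ t : ℝ, R < |t| → K t = 0) ∧
  (∫ u : Euc d, K ‖u‖) = 1 ∧
  (∃ τ : ℝ, 0 < τ ∧ ∀ i j : Fin d,
    (∫ u : Euc d, u i * u j * K ‖u‖) = if i = j then τ else 0)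

/-- Assumption (A3) on the bandwidth sequences `h₁, h₂`. -/
def BandwidthAssumption (dY dZ : ℕ) (h1 h2 : ℕ → ℝ) : Prop :=
  (∀ n, 0 < h1 n) ∧ (∀ n, 0 < h2 n) ∧
  Tendsto (fun n => h1 n ^ (dY + dZ) / h2 n ^ dZ) atTop (𝓝 0) ∧
  Tendsto (fun n : ℕ => (n : ℝ) * h1 n ^ (dY + dZ)) atTop atTop ∧
  Tendsto (fun n : ℕ => (n : ℝ) * h2 n ^ dZ) atTop atTop ∧
  Tendsto (fun n : ℕ => (n : ℝ) * h1 n ^ (dY + dZ + 4)) atTop (𝓝 0) ∧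
  Tendsto (fun n : ℕ => (n : ℝ) * h2 n ^ (dZ + 4)) atTop (𝓝 0)

/-- The remainder `R(x, y; u)` in the definition of a *nice* density, at step size `δ`. -/
def niceRem {α β : Type*} [NormedAddCommGroup β] [NormedSpace ℝ β]
    (f : α → β → ℝ) (δ : ℝ) (x : α) (y u : β) : ℝ :=
  (δ ^ 2)⁻¹ * (f x (y + δ • u) / f x y - 1 - δ * (fderiv ℝ (f x) y u / f x y))

/-- A joint density `f(x, y)` is *nice with respect to its second argument* if for every sequence
`δ_n → 0`, `sup_{‖u‖ = 1} limsup_n ∫ R_n(x, y; u)² f(x, y) dx` is uniformly bounded in `y`. -/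
def NiceWrt {α β : Type*} [MeasureSpace α] [NormedAddCommGroup β] [NormedSpace ℝ β]
    (f : α → β → ℝ) : Prop :=
  ∀ δ : ℕ → ℝ, (∀ n, δ n ≠ 0) → Tendsto δ atTop (𝓝 0) →
    ∃ C : ℝ, ∀ y u : β, ‖u‖ = 1 →
      Filter.limsup (fun n => ∫ x, (niceRem f (δ n) x y u) ^ 2 * f x y) atTop ≤ C

/-- The `(Y, Z)`-marginal density `p_{Y,Z}`. -/
def margYZ {dX dY dZ : ℕ} (p : Euc dX → Euc dY → Euc dZ → ℝ) (y : Euc dY) (z : Euc dZ) : ℝ :=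
  ∫ x, p x y z

/-- The `Z`-marginal density `p_Z`. -/
def margZ {dX dY dZ : ℕ} (p : Euc dX → Euc dY → Euc dZ → ℝ) (z : Euc dZ) : ℝ :=
  ∫ x, ∫ y, p x y z

/-- Assumption (A1): `p_{X,Z}` is nice with respect to `Z`, `p_{X,Y,Z}` is nice with respect to
`(Y,Z)` (equipped with the Euclidean/`L²` product norm), and `p_{X,Y,Z}` and all its marginals are
uniformly bounded. -/
def A1 {dX dY dZ : ℕ} (p : Euc dX → Euc dY → Euc dZ → ℝ) : Prop :=
  NiceWrt (fun (x : Euc dX) (z : Euc dZ) => ∫ y, p x y z) ∧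
  NiceWrt (fun (x : Euc dX) (w : WithLp 2 (Euc dY × Euc dZ)) =>
    p x (WithLp.equiv 2 (Euc dY × Euc dZ) w).1 (WithLp.equiv 2 (Euc dY × Euc dZ) w).2) ∧
  (∃ C : ℝ, (∀ x y z, p x y z ≤ C) ∧
    (∀ y z, (∫ x, p x y z) ≤ C) ∧ (∀ x z, (∫ y, p x y z) ≤ C) ∧ (∀ x y, (∫ z, p x y z) ≤ C) ∧
    (∀ x : Euc dX, (∫ y, ∫ z, p x y z) ≤ C) ∧ (∀ y : Euc dY, (∫ x, ∫ z, p x y z) ≤ C) ∧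
    (∀ z : Euc dZ, (∫ x, ∫ y, p x y z) ≤ C))

/-- The kernel weight `w_{(y', z')}(y, z) = K(‖(y,z) - (y',z')‖ / h₁)`, with the Euclidean norm on
the concatenated vector. -/
def wYZ {dY dZ : ℕ} (K : ℝ → ℝ) (h1 : ℝ) (y y' : Euc dY) (z z' : Euc dZ) : ℝ :=
  K (Real.sqrt (dist y y' ^ 2 + dist z z' ^ 2) / h1)

/-- The estimated conditional distribution `P̃_{X | Y = y, Z = z}` from `n` sample points. -/
def condEstYZ {dX dY dZ : ℕ} (K : ℝ → ℝ) (h1 : ℝ) (n : ℕ)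
    (Xs : ℕ → Euc dX) (Ys : ℕ → Euc dY) (Zs : ℕ → Euc dZ)
    (y : Euc dY) (z : Euc dZ) : Measure (Euc dX) :=
  (∑ i ∈ Finset.range n, ENNReal.ofReal (wYZ K h1 y (Ys i) z (Zs i)))⁻¹ •
    ∑ i ∈ Finset.range n, ENNReal.ofReal (wYZ K h1 y (Ys i) z (Zs i)) • Measure.dirac (Xs i)

/-- The estimated conditional distribution `P̃_{X | Z = z}` from `n` sample points. -/
def condEstZ {dX dZ : ℕ} (K : ℝ → ℝ) (h2 : ℝ) (n : ℕ)
    (Xs : ℕ → Euc dX) (Zs : ℕ → Euc dZ) (z : Euc dZ) : Measure (Euc dX) :=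
  (∑ i ∈ Finset.range n, ENNReal.ofReal (K (dist z (Zs i) / h2)))⁻¹ •
    ∑ i ∈ Finset.range n, ENNReal.ofReal (K (dist z (Zs i) / h2)) • Measure.dirac (Xs i)

/-- The regular conditional distribution `P_{X | Y = y, Z = z}`, given by the density
`x ↦ p(x,y,z) / p_{Y,Z}(y,z)`. -/
def condAtYZ {dX dY dZ : ℕ} (p : Euc dX → Euc dY → Euc dZ → ℝ)
    (y : Euc dY) (z : Euc dZ) : Measure (Euc dX) :=
  volume.withDensity fun x => ENNReal.ofReal (p x y z / margYZ p y z)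

/-- The regular conditional distribution `P_{X | Z = z}`, given by the density
`x ↦ p_{X,Z}(x,z) / p_Z(z)`. -/
def condAtZ {dX dY dZ : ℕ} (p : Euc dX → Euc dY → Euc dZ → ℝ) (z : Euc dZ) : Measure (Euc dX) :=
  volume.withDensity fun x => ENNReal.ofReal ((∫ y, p x y z) / margZ p z)

/-- `δ(x, y, z) = 1{‖x - z‖ ≤ ‖x - y‖}`. -/
def ballδ {d : ℕ} (x y z : Euc d) : ℝ := if dist x z ≤ dist x y then 1 else 0

/-- `η(x, y, z, z') = δ(x,y,z) δ(x,y,z')`. -/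
def ballη {d : ℕ} (x y z z' : Euc d) : ℝ := ballδ x y z * ballδ x y z'

/-- `φ_A`, one half of the ball divergence core function. -/
def ballφA {d : ℕ} (u1 u2 u3 u4 v3 v4 : Euc d) : ℝ :=
  ballη u1 u2 u3 u4 + ballη u1 u2 v3 v4 - ballη u1 u2 u3 v3 - ballη u1 u2 u4 v4

/-- The ball divergence core function `φ` of degree `(4, 4)`. -/
def ballφ {d : ℕ} (u v : Fin 4 → Euc d) : ℝ :=
  ballφA (u 0) (u 1) (u 2) (u 3) (v 2) (v 3) + ballφA (v 0) (v 1) (v 2) (v 3) (u 2) (u 3)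

/-- The symmetrized ball divergence core function `φ'`. -/
def ballφ' {d : ℕ} (u v : Fin 4 → Euc d) : ℝ :=
  ((Nat.factorial 4 * Nat.factorial 4 : ℕ) : ℝ)⁻¹ *
    ∑ τ : Equiv.Perm (Fin 4), ∑ σ : Equiv.Perm (Fin 4), ballφ (u ∘ τ) (v ∘ σ)

/-!
Conditionally on the `s`-th sample point, the remaining points are still independent and
identically distributed, so the `s`-th summand of the estimator can be studied at a fixed point.
There the expected kernel average converges to the truth by Lebesgue's differentiation theorem at
almost every point, for any integrable density and any bounded, compactly supported kernel. Its
variance is of order `1 / (n h ^ d)`, so along subsequences on which `n h ^ d` grows fast enough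
Borel–Cantelli upgrades this to almost sure convergence, and both conditional estimates converge
weakly almost surely. Since spheres are Lebesgue-null, the ball divergence is continuous under weak
convergence at absolutely continuous limits. As every subsequence has such a fast further
subsequence, each summand converges in probability, and exchangeability together with the weak law
of large numbers handles their average.
-/

/-! ### Ball divergence -/

section BallDivergence

/-- The quadruples `((u, v), (x, y))` for which `x` and `y` both lie in the closed ball of radius
`dist v u` around `u`. -/
def ballQuadruples (E : Type*) [PseudoMetricSpace E] : Set ((E × E) × (E × E)) :=
  {q | dist q.2.1 q.1.1 ≤ dist q.1.2 q.1.1} ∩ {q | dist q.2.2 q.1.1 ≤ dist q.1.2 q.1.1}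

theorem isClosed_ballQuadruples (E : Type*) [PseudoMetricSpace E] : IsClosed (ballQuadruples E) :=
  (isClosed_le (by fun_prop) (by fun_prop)).inter (isClosed_le (by fun_prop) (by fun_prop))

/-- The probability that `x` and `y` both fall in the ball of radius `dist v u` around `u`, where
`u, v ∼ R`, `x ∼ M` and `y ∼ M'` are independent. The ball divergence is a signed sum of six such
terms. -/
def ballMoment {E : Type*} [PseudoMetricSpace E] [MeasurableSpace E] (R M M' : Measure E) : ℝ :=
  ((R.prod R).prod (M.prod M')).real (ballQuadruples E)

section Expansion

variable {E : Type*} [PseudoMetricSpace E] [SecondCountableTopology E] [MeasurableSpace E]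
  [OpensMeasurableSpace E]

theorem measurable_real_closedBall_dist (M : Measure E) [IsFiniteMeasure M] :
    Measurable fun q : E × E => M.real (Metric.closedBall q.1 (dist q.2 q.1)) := by
  have hs : MeasurableSet {q : (E × E) × E | dist q.2 q.1.1 ≤ dist q.1.2 q.1.1} :=
    (isClosed_le (by fun_prop) (by fun_prop)).measurableSet
  exact (measurable_measure_prodMk_left (ν := M) hs).ennreal_toReal

theorem integrable_real_closedBall_mul (R M M' : Measure E) [IsFiniteMeasure R]
    [IsFiniteMeasure M] [IsFiniteMeasure M'] :
    Integrable (fun q : E × E => M.real (Metric.closedBall q.1 (dist q.2 q.1))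
      * M'.real (Metric.closedBall q.1 (dist q.2 q.1))) (R.prod R) := by
  refine Integrable.of_bound ((measurable_real_closedBall_dist M).mul
    (measurable_real_closedBall_dist M')).aestronglyMeasurable
    (M.real Set.univ * M'.real Set.univ) (ae_of_all _ fun q => ?_)
  rw [Real.norm_of_nonneg (by positivity)]
  exact mul_le_mul (measureReal_mono (Set.subset_univ _)) (measureReal_mono (Set.subset_univ _))
    (by positivity) (by positivity)

theorem ballMoment_eq_integral (R M M' : Measure E) [IsFiniteMeasure R] [IsFiniteMeasure M]
    [IsFiniteMeasure M'] :
    ballMoment R M M' = ∫ q, M.real (Metric.closedBall q.1 (dist q.2 q.1))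
      * M'.real (Metric.closedBall q.1 (dist q.2 q.1)) ∂(R.prod R) := by
  have hB := (isClosed_ballQuadruples E).measurableSet
  rw [ballMoment, measureReal_def, Measure.prod_apply hB, ← integral_toReal
    (measurable_measure_prodMk_left hB).aemeasurable (ae_of_all _ fun q => measure_lt_top _ _)]
  refine integral_congr_ae (ae_of_all _ fun q => ?_)
  simp only [measureReal_def]
  rw [← ENNReal.toReal_mul, ← Measure.prod_prod]
  rfl

theorem integral_sq_real_closedBall_sub (M P Q : Measure E) [IsFiniteMeasure M]
    [IsFiniteMeasure P] [IsFiniteMeasure Q] :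
    ∫ u, ∫ v, (P.real (Metric.closedBall u (dist v u))
      - Q.real (Metric.closedBall u (dist v u))) ^ 2 ∂M ∂M
      = ballMoment M P P - 2 * ballMoment M P Q + ballMoment M Q Q := by
  have hPP := integrable_real_closedBall_mul M P P
  have hPQ := (integrable_real_closedBall_mul M P Q).const_mul 2
  have hQQ := integrable_real_closedBall_mul M Q Q
  simp only [ballMoment_eq_integral]
  rw [← integral_const_mul, ← integral_sub' hPP hPQ, ← integral_add' (hPP.sub hPQ) hQQ,
    integral_prod _ ((hPP.sub hPQ).add hQQ)]
  congr! with u v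
  simp only [Pi.add_apply, Pi.sub_apply]
  ring

end Expansion

theorem ballDiv_eq_ballMoment {d : ℕ} (P Q : Measure (Euc d)) [IsFiniteMeasure P]
    [IsFiniteMeasure Q] :
    ballDiv P Q = (ballMoment P P P - 2 * ballMoment P P Q + ballMoment P Q Q)
      + (ballMoment Q P P - 2 * ballMoment Q P Q + ballMoment Q Q Q) := by
  rw [← integral_sq_real_closedBall_sub, ← integral_sq_real_closedBall_sub]
  rfl

theorem abs_ballDiv_le_two {d : ℕ} {P Q : Measure (Euc d)} (hP : P Set.univ ≤ 1)
    (hQ : Q Set.univ ≤ 1) : |ballDiv P Q| ≤ 2 := by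
  have real_le {M : Measure (Euc d)} (hM : M Set.univ ≤ 1) (s : Set (Euc d)) : M.real s ≤ 1 :=
    ENNReal.toReal_le_of_le_ofReal zero_le_one
      (by simpa using (measure_mono (Set.subset_univ s)).trans hM)
  have sq_le (u v : Euc d) : ‖(P.real (Metric.closedBall u (dist v u))
      - Q.real (Metric.closedBall u (dist v u))) ^ 2‖ ≤ 1 := by
    rw [norm_pow, Real.norm_eq_abs]
    refine pow_le_one₀ (abs_nonneg _) (abs_sub_le_of_nonneg_of_le ?_ ?_ ?_ ?_) <;>
      first | positivity | exact real_le ‹_› _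
  have integral_le {M : Measure (Euc d)} (hM : M Set.univ ≤ 1) {f : Euc d → ℝ}
      (hf : ∀ u, ‖f u‖ ≤ 1) : ‖∫ u, f u ∂M‖ ≤ 1 := by
    have := isFiniteMeasure_iff M |>.2 (hM.trans_lt ENNReal.one_lt_top)
    calc ‖∫ u, f u ∂M‖ ≤ 1 * M.real Set.univ :=
          norm_integral_le_of_norm_le_const (ae_of_all _ hf)
      _ ≤ 1 := by simpa using real_le hM Set.univ
  calc |ballDiv P Q| ≤ _ + _ := abs_add_le _ _
    _ ≤ 1 + 1 := add_le_add (integral_le hP fun u => integral_le hP (sq_le u))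
        (integral_le hQ fun u => integral_le hQ (sq_le u))
    _ = 2 := one_add_one_eq_two

section WeakConvergence

variable {E : Type*} [NormedAddCommGroup E] [NormedSpace ℝ E] [FiniteDimensional ℝ E]
  [MeasurableSpace E] [BorelSpace E]

theorem measure_prod_equidistant_eq_zero [Nontrivial E] {F : Type*} [MeasurableSpace F]
    {lam : Measure E} [lam.IsAddHaarMeasure] (N : Measure (E × E)) {M : Measure F} [SFinite M]
    {f : F → E} (hf : Measure.QuasiMeasurePreserving f M lam) :
    (N.prod M) {q | dist (f q.2) q.1.1 = dist q.1.2 q.1.1} = 0 := by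
  have hfm := hf.measurable
  rw [Measure.measure_prod_null (measurableSet_eq_fun (by fun_prop) (by fun_prop))]
  exact ae_of_all _ fun q =>
    hf.preimage_null (Measure.addHaar_sphere lam q.1 (dist q.2 q.1))

theorem measure_frontier_ballQuadruples {lam : Measure E} [lam.IsAddHaarMeasure]
    (N : Measure (E × E)) {M M' : Measure E} [SFinite M] [SFinite M'] (hM : M ≪ lam)
    (hM' : M' ≪ lam) : (N.prod (M.prod M')) (frontier (ballQuadruples E)) = 0 := by
  rcases subsingleton_or_nontrivial E with hE | hE
  · have : ballQuadruples E = Set.univ := Set.eq_univ_of_forall fun q => by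
      simp [ballQuadruples, Subsingleton.elim q.2.1 q.1.1, Subsingleton.elim q.2.2 q.1.1]
    simp [this]
  refine measure_mono_null ((frontier_inter_subset _ _).trans
    (Set.union_subset_union Set.inter_subset_left Set.inter_subset_right)) ?_
  exact measure_union_null
    (measure_mono_null (frontier_le_subset_eq (by fun_prop) (by fun_prop))
      (measure_prod_equidistant_eq_zero N
        (Measure.quasiMeasurePreserving_fst.mono_right hM)))
    (measure_mono_null (frontier_le_subset_eq (by fun_prop) (by fun_prop))
      (measure_prod_equidistant_eq_zero N
        (Measure.quasiMeasurePreserving_snd.mono_right hM')))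

theorem tendsto_ballMoment {ι : Type*} {l : Filter ι} {lam : Measure E} [lam.IsAddHaarMeasure]
    {Rn Mn Mn' : ι → ProbabilityMeasure E} {R M M' : ProbabilityMeasure E}
    (hRn : Tendsto Rn l (𝓝 R)) (hMn : Tendsto Mn l (𝓝 M)) (hMn' : Tendsto Mn' l (𝓝 M'))
    (hM : (M : Measure E) ≪ lam) (hM' : (M' : Measure E) ≪ lam) :
    Tendsto (fun n => ballMoment (Rn n : Measure E) (Mn n) (Mn' n)) l
      (𝓝 (ballMoment (R : Measure E) M M')) := by
  have prod_RR := (ProbabilityMeasure.continuous_prod.tendsto (R, R)).comp (hRn.prodMk_nhds hRn)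
  have prod_MM' :=
    (ProbabilityMeasure.continuous_prod.tendsto (M, M')).comp (hMn.prodMk_nhds hMn')
  have prod_all := (ProbabilityMeasure.continuous_prod.tendsto (R.prod R, M.prod M')).comp
    (prod_RR.prodMk_nhds prod_MM')
  exact (ENNReal.tendsto_toReal (measure_ne_top _ _)).comp
    (ProbabilityMeasure.tendsto_measure_of_null_frontier_of_tendsto' prod_all
      (measure_frontier_ballQuadruples _ hM hM'))

end WeakConvergence

theorem tendsto_ballDiv_probabilityMeasure {d : ℕ} {ι : Type*} {l : Filter ι}
    {Pn Qn : ι → ProbabilityMeasure (Euc d)} {P Q : ProbabilityMeasure (Euc d)}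
    (hPn : Tendsto Pn l (𝓝 P)) (hQn : Tendsto Qn l (𝓝 Q))
    (hP : (P : Measure (Euc d)) ≪ volume) (hQ : (Q : Measure (Euc d)) ≪ volume) :
    Tendsto (fun n => ballDiv (Pn n : Measure (Euc d)) (Qn n)) l
      (𝓝 (ballDiv (P : Measure (Euc d)) Q)) := by
  simp only [ballDiv_eq_ballMoment]
  refine Tendsto.add (Tendsto.add (Tendsto.sub ?_ (Tendsto.const_mul 2 ?_)) ?_)
    (Tendsto.add (Tendsto.sub ?_ (Tendsto.const_mul 2 ?_)) ?_) <;>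
  apply tendsto_ballMoment (lam := volume) <;> assumption

theorem exists_countable_isPiSystem_isTopologicalBasis (X : Type*) [TopologicalSpace X]
    [SecondCountableTopology X] : ∃ S : Set (Set X), S.Countable ∧ IsPiSystem S ∧
      TopologicalSpace.IsTopologicalBasis S := by
  obtain ⟨b, hbc, -, hb⟩ := TopologicalSpace.exists_countable_basis X
  refine ⟨_, (Set.countable_ofPred_finite_subset hbc).image _, ?_,
    TopologicalSpace.isTopologicalBasis_of_subbasis hb.eq_generateFrom⟩
  rintro _ ⟨f, ⟨hf, hfb⟩, rfl⟩ _ ⟨g, ⟨hg, hgb⟩, rfl⟩ -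
  exact ⟨f ∪ g, ⟨hf.union hg, Set.union_subset hfb hgb⟩, Set.sInter_union _ _⟩

theorem exists_eventuallyEq_tendsto_probabilityMeasure {X ι : Type*} [TopologicalSpace X]
    [SecondCountableTopology X] [MeasurableSpace X] [OpensMeasurableSpace X] {S : Set (Set X)}
    (hS : IsPiSystem S) (hSb : TopologicalSpace.IsTopologicalBasis S) {l : Filter ι}
    [l.IsCountablyGenerated] {Pn : ι → Measure X} (P : ProbabilityMeasure X)
    (hPn : ∀ᶠ n in l, IsProbabilityMeasure (Pn n))
    (hP : ∀ s ∈ S, Tendsto (fun n => Pn n s) l (𝓝 ((P : Measure X) s))) :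
    ∃ P' : ι → ProbabilityMeasure X, (∀ᶠ n in l, (P' n : Measure X) = Pn n) ∧
      Tendsto P' l (𝓝 P) := by
  classical
  let P' (n : ι) : ProbabilityMeasure X :=
    if h : IsProbabilityMeasure (Pn n) then ⟨Pn n, h⟩ else P
  have hP' : ∀ᶠ n in l, (P' n : Measure X) = Pn n := by
    filter_upwards [hPn] with n hn
    simp [P', hn]
  refine ⟨P', hP', hS.tendsto_probabilityMeasure_of_tendsto_of_mem
    (fun s hs => (hSb.isOpen hs).measurableSet) (fun u hu x hx => ?_) fun s hs => ?_⟩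
  · obtain ⟨s, hs, hxs, hsu⟩ := hSb.exists_subset_of_mem_open hx hu
    exact ⟨s, hs, hSb.mem_nhds hs hxs, hsu⟩
  · refine (ENNReal.tendsto_toNNReal (measure_ne_top _ s)).comp ((hP s hs).congr' ?_)
    filter_upwards [hP'] with n hn
    rw [hn]

theorem tendsto_ballDiv {d : ℕ} {ι : Type*} {l : Filter ι} [l.IsCountablyGenerated]
    {S : Set (Set (Euc d))} (hS : IsPiSystem S) (hSb : TopologicalSpace.IsTopologicalBasis S)
    {P Q : Measure (Euc d)} [hP : IsProbabilityMeasure P] [hQ : IsProbabilityMeasure Q]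
    (hPvol : P ≪ volume) (hQvol : Q ≪ volume) {Pn Qn : ι → Measure (Euc d)}
    (hPn : ∀ᶠ n in l, IsProbabilityMeasure (Pn n)) (hQn : ∀ᶠ n in l, IsProbabilityMeasure (Qn n))
    (hPS : ∀ s ∈ S, Tendsto (fun n => Pn n s) l (𝓝 (P s)))
    (hQS : ∀ s ∈ S, Tendsto (fun n => Qn n s) l (𝓝 (Q s))) :
    Tendsto (fun n => ballDiv (Pn n) (Qn n)) l (𝓝 (ballDiv P Q)) := by
  obtain ⟨P', hP', hP'lim⟩ :=
    exists_eventuallyEq_tendsto_probabilityMeasure hS hSb ⟨P, hP⟩ hPn hPS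
  obtain ⟨Q', hQ', hQ'lim⟩ :=
    exists_eventuallyEq_tendsto_probabilityMeasure hS hSb ⟨Q, hQ⟩ hQn hQS
  refine (tendsto_ballDiv_probabilityMeasure hP'lim hQ'lim hPvol hQvol).congr' ?_
  filter_upwards [hP', hQ'] with n hPeq hQeq
  rw [hPeq, hQeq]

theorem measurable_ballMoment {T E : Type*} [MeasurableSpace T] [PseudoMetricSpace E]
    [SecondCountableTopology E] [MeasurableSpace E] [OpensMeasurableSpace E]
    {R M M' : T → Measure E} (hR : Measurable R) (hM : Measurable M) (hM' : Measurable M')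
    (hR1 : ∀ t, R t Set.univ ≤ 1) (hM1 : ∀ t, M t Set.univ ≤ 1) (hM1' : ∀ t, M' t Set.univ ≤ 1) :
    Measurable fun t => ballMoment (R t) (M t) (M' t) := by
  let κR : Kernel T E := ⟨R, hR⟩
  let κM : Kernel T E := ⟨M, hM⟩
  let κM' : Kernel T E := ⟨M', hM'⟩
  have : IsFiniteKernel κR := ⟨⟨1, ENNReal.one_lt_top, hR1⟩⟩
  have : IsFiniteKernel κM := ⟨⟨1, ENNReal.one_lt_top, hM1⟩⟩
  have : IsFiniteKernel κM' := ⟨⟨1, ENNReal.one_lt_top, hM1'⟩⟩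
  have heq (t : T) : ballMoment (R t) (M t) (M' t)
      = (((κR ×ₖ κR) ×ₖ (κM ×ₖ κM')) t (ballQuadruples E)).toReal := by
    rw [Kernel.prod_apply, Kernel.prod_apply, Kernel.prod_apply]
    rfl
  simp only [heq]
  exact (Kernel.measurable_coe _ (isClosed_ballQuadruples E).measurableSet).ennreal_toReal

theorem measurable_ballDiv {T : Type*} [MeasurableSpace T] {d : ℕ} {P Q : T → Measure (Euc d)}
    (hP : Measurable P) (hQ : Measurable Q) (hP1 : ∀ t, P t Set.univ ≤ 1)
    (hQ1 : ∀ t, Q t Set.univ ≤ 1) : Measurable fun t => ballDiv (P t) (Q t) := by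
  have isFinite {M : Measure (Euc d)} (hM : M Set.univ ≤ 1) : IsFiniteMeasure M :=
    ⟨hM.trans_lt ENNReal.one_lt_top⟩
  have heq (t : T) := @ballDiv_eq_ballMoment d (P t) (Q t) (isFinite (hP1 t)) (isFinite (hQ1 t))
  simp only [heq]
  refine Measurable.add (Measurable.add (Measurable.sub ?_ (Measurable.const_mul ?_ 2)) ?_)
    (Measurable.add (Measurable.sub ?_ (Measurable.const_mul ?_ 2)) ?_) <;>
  apply measurable_ballMoment <;> assumption

end BallDivergence

/-! ### Conditional laws and their kernel estimates -/

section WeightedEmpirical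

variable {ι X : Type*} [Fintype ι] [MeasurableSpace X]

/-- The normalised weighted empirical measure `(∑ cᵢ)⁻¹ ∑ cᵢ δ_{xᵢ}`. It is the zero measure when
all the weights vanish. -/
def weightedEmpirical (c : ι → ℝ) (xs : ι → X) : Measure X :=
  (∑ i, ENNReal.ofReal (c i))⁻¹ • ∑ i, ENNReal.ofReal (c i) • Measure.dirac (xs i)

theorem weightedEmpirical_univ_le_one (c : ι → ℝ) (xs : ι → X) :
    weightedEmpirical c xs Set.univ ≤ 1 := by
  simp only [weightedEmpirical, Measure.smul_apply, Measure.coe_finsetSum, Finset.sum_apply,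
    smul_eq_mul, measure_univ, mul_one]
  exact ENNReal.inv_mul_le_one _

theorem weightedEmpirical_apply {c : ι → ℝ} (hc : ∀ i, 0 ≤ c i) (xs : ι → X) {A : Set X}
    (hA : MeasurableSet A) : weightedEmpirical c xs A
      = ENNReal.ofReal ((∑ i, c i * A.indicator 1 (xs i)) / ∑ i, c i) := by
  have mass_eq : (∑ i, ENNReal.ofReal (c i) • Measure.dirac (xs i)) A
      = ENNReal.ofReal (∑ i, c i * A.indicator 1 (xs i)) := by
    have term_nonneg (i : ι) : 0 ≤ c i * A.indicator (1 : X → ℝ) (xs i) :=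
      mul_nonneg (hc i) (Set.indicator_nonneg (fun _ _ => zero_le_one) _)
    rw [ENNReal.ofReal_sum_of_nonneg fun i _ => term_nonneg i]
    simp only [Measure.coe_finsetSum, Finset.sum_apply, Measure.smul_apply, smul_eq_mul,
      Measure.dirac_apply' _ hA]
    congr! 1 with i
    by_cases hi : xs i ∈ A <;> simp [hi]
  rw [weightedEmpirical, Measure.smul_apply, smul_eq_mul, mass_eq,
    ← ENNReal.ofReal_sum_of_nonneg fun i _ => hc i]
  rcases (Finset.sum_nonneg fun i _ => hc i : 0 ≤ ∑ i, c i).eq_or_lt with h0 | hpos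
  · have hc0 (i : ι) : c i = 0 :=
      (Finset.sum_eq_zero_iff_of_nonneg fun i _ => hc i).1 h0.symm i (Finset.mem_univ i)
    simp [hc0]
  · rw [ENNReal.ofReal_div_of_pos hpos, mul_comm, ENNReal.div_eq_inv_mul, mul_comm]

theorem isProbabilityMeasure_weightedEmpirical {c : ι → ℝ} (hc : ∀ i, 0 ≤ c i)
    (hpos : ∑ i, c i ≠ 0) (xs : ι → X) : IsProbabilityMeasure (weightedEmpirical c xs) :=
  ⟨by simp [weightedEmpirical_apply hc xs MeasurableSet.univ, div_self hpos]⟩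

theorem weightedEmpirical_comp_equiv {κ : Type*} [Fintype κ] (e : κ ≃ ι) (c : ι → ℝ)
    (xs : ι → X) : weightedEmpirical (c ∘ e) (xs ∘ e) = weightedEmpirical c xs := by
  simp only [weightedEmpirical, Function.comp_apply]
  rw [e.sum_comp fun i => ENNReal.ofReal (c i),
    e.sum_comp fun i => ENNReal.ofReal (c i) • Measure.dirac (xs i)]

theorem measurable_weightedEmpirical {T : Type*} [MeasurableSpace T] {c : T → ι → ℝ}
    {xs : T → ι → X} (hc : Measurable c) (hxs : Measurable xs) :
    Measurable fun t => weightedEmpirical (c t) (xs t) := by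
  refine Measure.measurable_of_measurable_coe _ fun A hA => ?_
  simp only [weightedEmpirical, Measure.smul_apply, Measure.coe_finsetSum, Finset.sum_apply,
    smul_eq_mul, Measure.dirac_apply' _ hA]
  have : Measurable (A.indicator (1 : X → ℝ≥0∞)) := measurable_one.indicator hA
  fun_prop

end WeightedEmpirical

section KernelCondMeasure

variable {ι X W : Type*} [Fintype ι] [MeasurableSpace X] [AddCommGroup W] [Module ℝ W]

/-- The kernel estimate, with kernel `k` and bandwidth `h`, of the conditional law at `w` of the
first component of a sample in `X × W` given the second. -/
def kernelCondMeasure (k : W → ℝ) (h : ℝ) (sample : ι → X × W) (w : W) : Measure X :=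
  weightedEmpirical (fun i => k (h⁻¹ • (w - (sample i).2))) (fun i => (sample i).1)

theorem kernelCondMeasure_comp_equiv {κ : Type*} [Fintype κ] (e : κ ≃ ι) (k : W → ℝ) (h : ℝ)
    (sample : ι → X × W) (w : W) :
    kernelCondMeasure k h (sample ∘ e) w = kernelCondMeasure k h sample w :=
  weightedEmpirical_comp_equiv e (fun i => k (h⁻¹ • (w - (sample i).2)))
    (fun i => (sample i).1)

theorem kernelCondMeasure_univ_le_one (k : W → ℝ) (h : ℝ) (sample : ι → X × W) (w : W) :
    kernelCondMeasure k h sample w Set.univ ≤ 1 :=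
  weightedEmpirical_univ_le_one _ _

theorem measurable_kernelCondMeasure [MeasurableSpace W] [MeasurableSub₂ W]
    [MeasurableConstSMul ℝ W] {T : Type*} [MeasurableSpace T] {k : W → ℝ} (hk : Measurable k)
    (h : ℝ) {sample : T → ι → X × W} {w : T → W} (hsample : Measurable sample)
    (hw : Measurable w) : Measurable fun t => kernelCondMeasure k h (sample t) (w t) :=
  have hpoint (i : ι) : Measurable fun t => sample t i := (measurable_pi_apply i).comp hsample
  measurable_weightedEmpirical (c := fun t i => k (h⁻¹ • (w t - (sample t i).2)))
    (xs := fun t i => (sample t i).1)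
    (measurable_pi_lambda _ fun i => hk.comp ((hw.sub (hpoint i).snd).const_smul h⁻¹))
    (measurable_pi_lambda _ fun i => (hpoint i).fst)

end KernelCondMeasure

section CondLaw

variable {X W : Type*} [MeasurableSpace X]

/-- The conditional law at `w` of the first component given the second, for a pair in `X × W`
whose joint density with respect to a product measure `ρ.prod _` is `f`. -/
def condLaw (ρ : Measure X) (f : X × W → ℝ) (w : W) : Measure X :=
  ρ.withDensity fun x => ENNReal.ofReal (f (x, w) / ∫ x, f (x, w) ∂ρ)

variable {ρ : Measure X} {f : X × W → ℝ}

theorem condLaw_apply (hf : ∀ u, 0 ≤ f u) (w : W) {A : Set X} (hA : MeasurableSet A) :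
    condLaw ρ f w A = ENNReal.ofReal ((∫ x in A, f (x, w) ∂ρ) / ∫ x, f (x, w) ∂ρ) := by
  rw [condLaw, withDensity_apply _ hA]
  by_cases h0 : ∫ x, f (x, w) ∂ρ = 0
  · simp [h0]
  have hint : Integrable (fun x => f (x, w)) ρ := not_imp_comm.1 integral_undef h0
  rw [← integral_div, ofReal_integral_eq_lintegral_ofReal (hint.integrableOn.div_const _)]
  exact ae_of_all _ fun x => div_nonneg (hf _) (integral_nonneg fun _ => hf _)

theorem isProbabilityMeasure_condLaw (hf : ∀ u, 0 ≤ f u) {w : W} (hw : ∫ x, f (x, w) ∂ρ ≠ 0) :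
    IsProbabilityMeasure (condLaw ρ f w) :=
  ⟨by simp [condLaw_apply hf w MeasurableSet.univ, div_self hw]⟩

theorem condLaw_univ_le_one (hf : ∀ u, 0 ≤ f u) (w : W) : condLaw ρ f w Set.univ ≤ 1 := by
  rw [condLaw_apply hf w MeasurableSet.univ, setIntegral_univ]
  exact ENNReal.ofReal_le_one.2 (div_self_le_one _)

theorem measurable_condLaw [MeasurableSpace W] [SFinite ρ] (hf : Measurable f) :
    Measurable (condLaw ρ f) := by
  refine Measure.measurable_of_measurable_coe _ fun A hA => ?_
  simp only [condLaw, withDensity_apply _ hA]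
  have hmarg : Measurable fun w => ∫ x, f (x, w) ∂ρ :=
    hf.stronglyMeasurable.integral_prod_left'.measurable
  exact Measurable.lintegral_prod_left'
    (f := fun u : X × W => ENNReal.ofReal (f u / ∫ x, f (x, u.2) ∂ρ))
    (hf.div (hmarg.comp measurable_snd)).ennreal_ofReal

end CondLaw

section RealDensity

/-- The measurable map `π` has, under `ν`, the everywhere nonnegative real-valued density `f` with
respect to `ρ`. -/
structure HasRealDensity {E F : Type*} [MeasurableSpace E] [MeasurableSpace F] (ν : Measure E)
    (π : E → F) (ρ : Measure F) (f : F → ℝ) : Prop where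
  measurable_fun : Measurable π
  measurable_density : Measurable f
  nonneg : ∀ u, 0 ≤ f u
  map_eq : ν.map π = ρ.withDensity fun u => ENNReal.ofReal (f u)

namespace HasRealDensity

variable {E F G : Type*} [MeasurableSpace E] [MeasurableSpace F] [MeasurableSpace G]
  {ν : Measure E} {π : E → F} {ρ : Measure F} {f : F → ℝ}

theorem integrable [IsFiniteMeasure ν] (hd : HasRealDensity ν π ρ f) : Integrable f ρ := by
  refine ⟨hd.measurable_density.aestronglyMeasurable, ?_⟩
  rw [hasFiniteIntegral_iff_ofReal (ae_of_all _ hd.nonneg), ← setLIntegral_univ,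
    ← withDensity_apply _ MeasurableSet.univ, ← hd.map_eq]
  exact measure_lt_top _ _

theorem map_absolutelyContinuous (hd : HasRealDensity ν π ρ f) : ν.map π ≪ ρ :=
  hd.map_eq ▸ withDensity_absolutelyContinuous _ _

theorem ae_pos (hd : HasRealDensity ν π ρ f) : ∀ᵐ v ∂ν, 0 < f (π v) := by
  refine ae_of_ae_map hd.measurable_fun.aemeasurable (p := fun u => 0 < f u) ?_
  rw [hd.map_eq, ae_withDensity_iff hd.measurable_density.ennreal_ofReal]
  exact ae_of_all _ fun u hu => ENNReal.ofReal_pos.1 hu.bot_lt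

theorem integral_comp (hd : HasRealDensity ν π ρ f) {g : F → ℝ} (hg : Measurable g) :
    ∫ v, g (π v) ∂ν = ∫ u, f u * g u ∂ρ := by
  rw [← integral_map hd.measurable_fun.aemeasurable hg.aestronglyMeasurable, hd.map_eq,
    integral_withDensity_eq_integral_toReal_smul hd.measurable_density.ennreal_ofReal (by simp)]
  simp only [ENNReal.toReal_ofReal (hd.nonneg _), smul_eq_mul]

theorem comp_equiv (hd : HasRealDensity ν π ρ f) (e : F ≃ᵐ G) {σ : Measure G}
    (he : MeasurePreserving e ρ σ) : HasRealDensity ν (e ∘ π) σ (f ∘ e.symm) where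
  measurable_fun := e.measurable.comp hd.measurable_fun
  measurable_density := hd.measurable_density.comp e.symm.measurable
  nonneg _ := hd.nonneg _
  map_eq := by
    ext s hs
    rw [← Measure.map_map e.measurable hd.measurable_fun, hd.map_eq, e.map_apply,
      withDensity_apply _ (e.measurable hs), withDensity_apply _ hs,
      ← he.setLIntegral_comp_preimage_emb e.measurableEmbedding]
    simp

theorem fst [IsFiniteMeasure ν] [SFinite ρ] {σ : Measure G} [SFinite σ] {π : E → F × G}
    {f : F × G → ℝ} (hd : HasRealDensity ν π (ρ.prod σ) f) :
    HasRealDensity ν (fun v => (π v).1) ρ (fun u => ∫ y, f (u, y) ∂σ) where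
  measurable_fun := hd.measurable_fun.fst
  measurable_density := hd.measurable_density.stronglyMeasurable.integral_prod_right'.measurable
  nonneg _ := integral_nonneg fun _ => hd.nonneg _
  map_eq := by
    have hf := hd.measurable_density.ennreal_ofReal
    ext s hs
    have hmap : ν.map (fun v => (π v).1) = (ν.map π).map Prod.fst :=
      (Measure.map_map measurable_fst hd.measurable_fun).symm
    rw [hmap, Measure.map_apply measurable_fst hs, hd.map_eq,
      withDensity_apply _ (measurable_fst hs), ← Set.prod_univ, ← Measure.prod_restrict,
      Measure.restrict_univ, lintegral_prod _ hf.aemeasurable, withDensity_apply _ hs]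
    refine lintegral_congr_ae (ae_restrict_of_ae ?_)
    filter_upwards [hd.integrable.prod_right_ae] with u hu
    exact (ofReal_integral_eq_lintegral_ofReal hu (ae_of_all _ fun _ => hd.nonneg _)).symm

theorem snd [IsFiniteMeasure ν] [SFinite ρ] {σ : Measure G} [SFinite σ] {π : E → F × G}
    {f : F × G → ℝ} (hd : HasRealDensity ν π (ρ.prod σ) f) :
    HasRealDensity ν (fun v => (π v).2) σ (fun w => ∫ x, f (x, w) ∂ρ) :=
  (hd.comp_equiv MeasurableEquiv.prodComm Measure.measurePreserving_swap).fst

theorem fst_snd_snd [IsFiniteMeasure ν] {H : Type*} [MeasurableSpace H] [SFinite ρ]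
    {σ : Measure G} [SFinite σ] {τ : Measure H} [SFinite τ] {π : E → F × G × H}
    {f : F × G × H → ℝ} (hd : HasRealDensity ν π (ρ.prod (σ.prod τ)) f) :
    HasRealDensity ν (fun v => ((π v).1, (π v).2.2)) (ρ.prod τ)
      (fun u => ∫ y, f (u.1, y, u.2) ∂σ) :=
  (hd.comp_equiv
    (((MeasurableEquiv.refl F).prodCongr MeasurableEquiv.prodComm).trans
      MeasurableEquiv.prodAssoc.symm)
    ((measurePreserving_prodAssoc ρ τ σ).symm.comp
      ((MeasurePreserving.id ρ).prod Measure.measurePreserving_swap))).fst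

theorem integral_mul_indicator [IsFiniteMeasure ν] [SFinite ρ] {σ : Measure G} [SFinite σ]
    {π : E → F × G} {f : F × G → ℝ} (hd : HasRealDensity ν π (ρ.prod σ) f) {A : Set F}
    (hA : MeasurableSet A) {g : G → ℝ} (hg : Measurable g) {C : ℝ} (hC : ∀ w, |g w| ≤ C) :
    ∫ v, g (π v).2 * A.indicator 1 (π v).1 ∂ν = ∫ w, g w * ∫ x in A, f (x, w) ∂ρ ∂σ := by
  have : Measurable (A.indicator (1 : F → ℝ)) := measurable_one.indicator hA
  have hgm : Measurable fun u : F × G => g u.2 * A.indicator 1 u.1 := by fun_prop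
  have hint : Integrable (fun u => f u * (g u.2 * A.indicator 1 u.1)) (ρ.prod σ) := by
    refine hd.integrable.mul_bdd (c := C) hgm.aestronglyMeasurable (ae_of_all _ fun u => ?_)
    refine le_trans ?_ (hC u.2)
    by_cases hu : u.1 ∈ A <;> simp [hu]
  rw [hd.integral_comp hgm, integral_prod_symm _ hint]
  congr! with w
  rw [← integral_const_mul, ← integral_indicator hA]
  refine integral_congr_ae (ae_of_all _ fun x => ?_)
  by_cases hx : x ∈ A <;> simp [hx, mul_comm]

end HasRealDensity

end RealDensity

/-! ### Smoothing kernels and bandwidths -/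

/-- A smoothing kernel with respect to `lam`: nonnegative, bounded, compactly supported and of
positive mass. Positivity of the Bochner integral forces integrability. -/
structure IsSmoothingKernel {W : Type*} [TopologicalSpace W] [MeasurableSpace W]
    (lam : Measure W) (k : W → ℝ) : Prop where
  nonneg : ∀ u, 0 ≤ k u
  bounded : ∃ M, ∀ u, k u ≤ M
  hasCompactSupport : HasCompactSupport k
  integral_pos : 0 < ∫ u, k u ∂lam

namespace IsSmoothingKernel

section Basic

variable {W : Type*} [TopologicalSpace W] [MeasurableSpace W] {lam : Measure W} {k : W → ℝ}

theorem integrable (hk : IsSmoothingKernel lam k) : Integrable k lam :=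
  not_imp_comm.1 integral_undef hk.integral_pos.ne'

theorem comp_homeomorph [BorelSpace W] {W' : Type*} [TopologicalSpace W'] [MeasurableSpace W']
    [BorelSpace W'] {lam' : Measure W'} (hk : IsSmoothingKernel lam k) (e : W' ≃ₜ W)
    (he : MeasurePreserving e lam' lam) : IsSmoothingKernel lam' (k ∘ e) where
  nonneg _ := hk.nonneg _
  bounded := hk.bounded.imp fun _ hM _ => hM _
  hasCompactSupport := hk.hasCompactSupport.comp_homeomorph e
  integral_pos := by simpa [he.integral_comp e.measurableEmbedding] using hk.integral_pos

theorem integrable_mul [OpensMeasurableSpace W] [R1Space W] (hk : IsSmoothingKernel lam k)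
    {m : W → ℝ} (hm : LocallyIntegrable m lam) : Integrable (fun w => k w * m w) lam := by
  obtain ⟨M, hM⟩ := hk.bounded
  have hsupp : Function.support (fun w => k w * m w) ⊆ tsupport k :=
    (Function.support_mul_subset_left k m).trans (subset_tsupport k)
  refine (integrableOn_iff_integrable_of_support_subset hsupp).1 ?_
  refine (hm.integrableOn_isCompact hk.hasCompactSupport).bdd_mul (c := M)
    hk.integrable.aestronglyMeasurable.restrict (ae_of_all _ fun w => ?_)
  rw [Real.norm_of_nonneg (hk.nonneg w)]
  exact hM w

theorem exists_measurable_ae_eq [MeasurableSingletonClass W] (hk : IsSmoothingKernel lam k)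
    (w₀ : W) : ∃ k', Measurable k' ∧ IsSmoothingKernel lam k' ∧ k' =ᵐ[lam] k ∧ k' w₀ = k w₀ := by
  obtain ⟨g, hg, hkg⟩ := hk.integrable.aestronglyMeasurable.aemeasurable
  obtain ⟨T, hT, hTm, hT0⟩ := exists_measurable_superset_of_null (ae_iff.1 hkg)
  set N := T \ {w₀}
  have hk' : Nᶜ.indicator k =ᵐ[lam] k := by
    filter_upwards [measure_eq_zero_iff_ae_notMem.1 (measure_mono_null Set.sdiff_subset hT0)]
      with w hw using Set.indicator_of_mem hw k
  have hle (w : W) : Nᶜ.indicator k w ≤ k w :=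
    Set.indicator_le_self' (fun _ _ => hk.nonneg _) w
  refine ⟨Nᶜ.indicator k, ?_, ⟨Set.indicator_nonneg fun _ _ => hk.nonneg _,
    hk.bounded.imp fun _ hM w => (hle w).trans (hM w),
    hk.hasCompactSupport.mono (by simp [Set.support_indicator]),
    by simpa [integral_congr_ae hk'] using hk.integral_pos⟩, hk', by simp [N]⟩
  refine (hg.indicator hTm.compl).measurable_of_countable_ne
    ((Set.countable_singleton w₀).mono fun w hw => ?_)
  by_contra hne
  refine hw ?_
  by_cases hwT : w ∈ T
  · simp [hwT, N, show w ≠ w₀ from hne]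
  · simp [hwT, N, not_not.1 (mt (@hT w) hwT)]

end Basic

section Rescale

variable {W : Type*} [NormedAddCommGroup W] [NormedSpace ℝ W] [FiniteDimensional ℝ W]
  [MeasurableSpace W] [BorelSpace W] {lam : Measure W} {k : W → ℝ}

theorem norm_integral_rescale_mul_le (hk : IsSmoothingKernel lam k) {M R : ℝ}
    (hM : ∀ u, k u ≤ M) (hR : ∀ u, R < ‖u‖ → k u = 0) {h : ℝ} (hh : 0 < h) (w : W) {m : W → ℝ}
    (hm : LocallyIntegrable m lam) :
    ‖∫ w', k (h⁻¹ • (w - w')) * m w' ∂lam‖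
      ≤ M * ∫ w' in Metric.closedBall w (R * h), ‖m w'‖ ∂lam := by
  have hball : MeasurableSet (Metric.closedBall w (R * h)) :=
    Metric.isClosed_closedBall.measurableSet
  have hint : IntegrableOn (fun w' => M * ‖m w'‖) (Metric.closedBall w (R * h)) lam :=
    (hm.integrableOn_isCompact (isCompact_closedBall w (R * h))).norm.const_mul M
  rw [← integral_const_mul, ← integral_indicator hball]
  refine norm_integral_le_of_norm_le (hint.integrable_indicator hball)
    (ae_of_all _ fun w' => ?_)
  by_cases hw' : w' ∈ Metric.closedBall w (R * h)
  · rw [Set.indicator_of_mem hw', norm_mul, Real.norm_of_nonneg (hk.nonneg _)]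
    exact mul_le_mul_of_nonneg_right (hM _) (norm_nonneg _)
  · have hfar : R < ‖h⁻¹ • (w - w')‖ := by
      rw [norm_smul, norm_inv, Real.norm_of_nonneg hh.le, ← dist_eq_norm, dist_comm,
        inv_mul_eq_div, lt_div_iff₀ hh]
      simpa using hw'
    simp [hw', hR _ hfar]

variable [lam.IsAddHaarMeasure]

theorem integral_rescale (k : W → ℝ) {h : ℝ} (hh : 0 ≤ h) (w : W) :
    ∫ w', k (h⁻¹ • (w - w')) ∂lam = h ^ Module.finrank ℝ W * ∫ u, k u ∂lam := by
  rw [integral_sub_left_eq_self (fun u => k (h⁻¹ • u)) lam w,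
    Measure.integral_comp_inv_smul_of_nonneg lam k hh, smul_eq_mul]

theorem rescale (hk : IsSmoothingKernel lam k) {h : ℝ} (hh : 0 < h) (w : W) :
    IsSmoothingKernel lam fun w' => k (h⁻¹ • (w - w')) where
  nonneg _ := hk.nonneg _
  bounded := hk.bounded.imp fun _ hM _ => hM _
  hasCompactSupport := hk.hasCompactSupport.comp_homeomorph
    ((Homeomorph.subLeft w).trans (Homeomorph.smulOfNeZero h⁻¹ (inv_ne_zero hh.ne')))
  integral_pos := by
    rw [integral_rescale k hh.le]
    exact mul_pos (pow_pos hh _) hk.integral_pos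

theorem norm_average_rescale_sub_le (hk : IsSmoothingKernel lam k) {M R : ℝ}
    (hM : ∀ u, k u ≤ M) (hRpos : 0 < R) (hR : ∀ u, R < ‖u‖ → k u = 0) {h : ℝ} (hh : 0 < h)
    (w : W) {m : W → ℝ} (hm : LocallyIntegrable m lam) :
    ‖(h ^ Module.finrank ℝ W)⁻¹ * ∫ w', k (h⁻¹ • (w - w')) * m w' ∂lam - (∫ u, k u ∂lam) * m w‖
      ≤ M * (R ^ Module.finrank ℝ W * lam.real (Metric.ball 0 1))
        * ⨍ w' in Metric.closedBall w (R * h), ‖m w' - m w‖ ∂lam := by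
  have hscale := integral_rescale (lam := lam) k hh.le w
  set d := Module.finrank ℝ W
  have hpow : 0 < h ^ d := pow_pos hh d
  have hunit : 0 < lam.real (Metric.ball (0 : W) 1) :=
    ENNReal.toReal_pos (Metric.measure_ball_pos lam 0 one_pos).ne' measure_ball_lt_top.ne
  have hvol : lam.real (Metric.closedBall w (R * h))
      = h ^ d * (R ^ d * lam.real (Metric.ball (0 : W) 1)) := by
    rw [Measure.addHaar_real_closedBall lam w (mul_pos hRpos hh).le, mul_pow]
    ring
  have hcentred : (h ^ d)⁻¹ * ∫ w', k (h⁻¹ • (w - w')) * m w' ∂lam - (∫ u, k u ∂lam) * m w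
      = (h ^ d)⁻¹ * ∫ w', k (h⁻¹ • (w - w')) * (m w' - m w) ∂lam := by
    simp only [mul_sub]
    rw [integral_sub ((hk.rescale hh w).integrable_mul hm)
      ((hk.rescale hh w).integrable.mul_const _), integral_mul_const, hscale, mul_sub,
      ← mul_assoc, inv_mul_cancel_left₀ hpow.ne']
  calc ‖(h ^ d)⁻¹ * ∫ w', k (h⁻¹ • (w - w')) * m w' ∂lam - (∫ u, k u ∂lam) * m w‖
      = (h ^ d)⁻¹ * ‖∫ w', k (h⁻¹ • (w - w')) * (m w' - m w) ∂lam‖ := by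
        rw [hcentred, norm_mul, Real.norm_of_nonneg (inv_nonneg.2 hpow.le)]
    _ ≤ (h ^ d)⁻¹ * (M * ∫ w' in Metric.closedBall w (R * h), ‖m w' - m w‖ ∂lam) := by
        gcongr
        exact hk.norm_integral_rescale_mul_le hM hR hh w (hm.sub (locallyIntegrable_const _))
    _ = M * (R ^ d * lam.real (Metric.ball 0 1))
        * ⨍ w' in Metric.closedBall w (R * h), ‖m w' - m w‖ ∂lam := by
        rw [setAverage_eq, hvol, smul_eq_mul]
        have := pow_pos hRpos d
        field_simp

theorem ae_tendsto_average_rescale (hk : IsSmoothingKernel lam k) {m : W → ℝ}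
    (hm : LocallyIntegrable m lam) :
    ∀ᵐ w ∂lam, Tendsto (fun h : ℝ => (h ^ Module.finrank ℝ W)⁻¹ *
      ∫ w', k (h⁻¹ • (w - w')) * m w' ∂lam) (𝓝[>] 0) (𝓝 ((∫ u, k u ∂lam) * m w)) := by
  obtain ⟨M, hM⟩ := hk.bounded
  obtain ⟨R, hRpos, hR⟩ := hk.hasCompactSupport.isCompact.isBounded.exists_pos_norm_le
  have hkR (u : W) (hu : R < ‖u‖) : k u = 0 :=
    image_eq_zero_of_notMem_tsupport fun hmem => hu.not_ge (hR u hmem)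
  have hradius : Tendsto (fun h => R * h) (𝓝[>] 0) (𝓝[>] 0) := by
    refine tendsto_nhdsWithin_iff.2 ⟨?_, ?_⟩
    · exact ((continuous_const_mul R).tendsto' 0 0 (mul_zero R)).mono_left nhdsWithin_le_nhds
    · filter_upwards [self_mem_nhdsWithin] with h hh using mul_pos hRpos hh
  have hcenter (w : W) : ∀ᶠ h in 𝓝[>] (0 : ℝ), w ∈ Metric.closedBall w (1 * (R * h)) := by
    filter_upwards [self_mem_nhdsWithin] with h (hh : 0 < h)
    exact Metric.mem_closedBall_self (by positivity)
  filter_upwards [IsUnifLocDoublingMeasure.ae_tendsto_average_norm_sub lam hm 1] with w hw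
  have hbound := (hw (fun _ => w) (fun h => R * h) hradius (hcenter w)).const_mul
    (M * (R ^ Module.finrank ℝ W * lam.real (Metric.ball (0 : W) 1)))
  rw [mul_zero] at hbound
  rw [tendsto_iff_norm_sub_tendsto_zero]
  refine squeeze_zero' (Eventually.of_forall fun _ => norm_nonneg _) ?_ hbound
  filter_upwards [self_mem_nhdsWithin] with h (hh : 0 < h)
  exact hk.norm_average_rescale_sub_le hM hRpos hkR hh w hm

end Rescale

end IsSmoothingKernel

/-- A bandwidth sequence for kernel smoothing of samples of size `n` in dimension `d`: `h n` tends
to zero while the local sample size `n * h n ^ d` tends to infinity. -/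
structure IsBandwidth (d : ℕ) (h : ℕ → ℝ) : Prop where
  pos : ∀ n, 0 < h n
  tendsto_zero : Tendsto h atTop (𝓝 0)
  tendsto_mul_pow : Tendsto (fun n : ℕ => (n : ℝ) * h n ^ d) atTop atTop

namespace IsBandwidth

variable {d : ℕ} {h : ℕ → ℝ}

theorem tendsto_nhdsGT_zero (hh : IsBandwidth d h) : Tendsto h atTop (𝓝[>] 0) :=
  tendsto_nhdsWithin_iff.2 ⟨hh.tendsto_zero, Eventually.of_forall hh.pos⟩

theorem comp_succ (hh : IsBandwidth d h) : IsBandwidth d fun n => h (n + 1) where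
  pos _ := hh.pos _
  tendsto_zero := (tendsto_add_atTop_iff_nat 1).2 hh.tendsto_zero
  tendsto_mul_pow := by
    have hhalf := ((tendsto_add_atTop_iff_nat 1).2 hh.tendsto_mul_pow).const_mul_atTop
      (show (0 : ℝ) < 1 / 2 by norm_num)
    refine tendsto_atTop_mono' _ ?_ hhalf
    filter_upwards [eventually_ge_atTop 1] with n hn
    have hn1 : (1 : ℝ) ≤ n := by exact_mod_cast hn
    have hpow : 0 < h (n + 1) ^ d := pow_pos (hh.pos _) _
    push_cast
    nlinarith

theorem of_tendsto_mul_pow_add (hpos : ∀ n, 0 < h n) {r : ℕ} (hr : r ≠ 0)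
    (hmul : Tendsto (fun n : ℕ => (n : ℝ) * h n ^ d) atTop atTop)
    (hmul_add : Tendsto (fun n : ℕ => (n : ℝ) * h n ^ (d + r)) atTop (𝓝 0)) :
    IsBandwidth d h where
  pos := hpos
  tendsto_mul_pow := hmul
  tendsto_zero := by
    have hpow : Tendsto (fun n => h n ^ r) atTop (𝓝 0) := by
      refine (hmul_add.div_atTop hmul).congr' ?_
      filter_upwards [eventually_gt_atTop 0] with n hn
      have hn0 : (n : ℝ) ≠ 0 := by exact_mod_cast hn.ne'
      have := (hpos n).ne'
      rw [pow_add]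
      field_simp
    have hroot := hpow.rpow_const (p := (r : ℝ)⁻¹) (Or.inr (by positivity))
    rw [Real.zero_rpow (by positivity)] at hroot
    exact hroot.congr fun n => Real.pow_rpow_inv_natCast (hpos n).le hr

end IsBandwidth

/-! ### Laws of large numbers along fast subsequences -/

section FastLLN

variable {Ω E : Type*} [MeasurableSpace Ω] [MeasurableSpace E] {μ : Measure Ω} {ν : Measure E}

theorem ae_tendsto_zero_of_summable_integral_sq {Y : ℕ → Ω → ℝ} (hY : ∀ j, MemLp (Y j) 2 μ)
    (hsum : Summable fun j => ∫ ω, Y j ω ^ 2 ∂μ) :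
    ∀ᵐ ω ∂μ, Tendsto (fun j => Y j ω) atTop (𝓝 0) := by
  have hmeas (j : ℕ) : AEMeasurable (fun ω => ENNReal.ofReal (Y j ω ^ 2)) μ :=
    ((hY j).aestronglyMeasurable.aemeasurable.pow_const 2).ennreal_ofReal
  have hfinite : ∫⁻ ω, ∑' j, ENNReal.ofReal (Y j ω ^ 2) ∂μ ≠ ∞ := by
    rw [lintegral_tsum hmeas]
    simp only [← ofReal_integral_eq_lintegral_ofReal (hY _).integrable_sq
      (ae_of_all _ fun _ => sq_nonneg _)]
    exact hsum.tsum_ofReal_ne_top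
  filter_upwards [ae_lt_top' (.tsum hmeas) hfinite] with ω hω
  have hsq : Tendsto (fun j => Y j ω ^ 2) atTop (𝓝 0) := by
    simpa [Function.comp_def, ENNReal.toReal_ofReal, sq_nonneg] using
      (ENNReal.tendsto_toReal ENNReal.zero_ne_top).comp
        (ENNReal.tendsto_atTop_zero_of_tsum_ne_top hω.ne)
  rw [tendsto_zero_iff_abs_tendsto_zero]
  simpa [Function.comp_def, Real.sqrt_sq_eq_abs] using hsq.sqrt

variable {V : ℕ → Ω → E}

theorem variance_sum_comp_le [IsProbabilityMeasure μ] (hV : ∀ i, Measurable (V i))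
    (hind : iIndepFun V μ) (hlaw : ∀ i, μ.map (V i) = ν) {g : E → ℝ} (hg : Measurable g)
    (hg0 : ∀ v, 0 ≤ g v) {M : ℝ} (hgM : ∀ v, g v ≤ M) (s : Finset ℕ) :
    Var[fun ω => ∑ i ∈ s, g (V i ω); μ] ≤ M * (s.card * ∫ v, g v ∂ν) := by
  have hmem (i : ℕ) : MemLp (fun ω => g (V i ω)) 2 μ :=
    .of_bound (hg.comp (hV i)).aestronglyMeasurable M
      (ae_of_all _ fun ω => (Real.norm_of_nonneg (hg0 _)).trans_le (hgM _))
  have hterm (i : ℕ) : Var[fun ω => g (V i ω); μ] ≤ M * ∫ v, g v ∂ν := by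
    refine (variance_le_expectation_sq (hmem i).aestronglyMeasurable).trans ?_
    rw [← hlaw i, integral_map (hV i).aemeasurable hg.aestronglyMeasurable, ← integral_const_mul]
    refine integral_mono (hmem i).integrable_sq (((hmem i).integrable one_le_two).const_mul M)
      fun ω => ?_
    simp only [Pi.pow_apply, sq]
    exact mul_le_mul_of_nonneg_right (hgM _) (hg0 _)
  have hsum : Var[fun ω => ∑ i ∈ s, g (V i ω); μ] = ∑ i ∈ s, Var[fun ω => g (V i ω); μ] := by
    rw [← IndepFun.variance_sum (fun i _ => hmem i) fun i _ i' _ hne =>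
      (hind.indepFun hne).comp hg hg]
    congr with ω
    simp
  rw [hsum]
  refine (Finset.sum_le_sum fun i _ => hterm i).trans_eq ?_
  rw [Finset.sum_const, nsmul_eq_mul]
  ring

/-- The variance of the `j`-th average is of order `1 / b j`, so the Borel–Cantelli lemma applies
along sequences for which `1 / b j` is summable. -/
theorem ae_tendsto_sum_range_div [IsProbabilityMeasure μ] (hV : ∀ i, Measurable (V i))
    (hind : iIndepFun V μ) (hlaw : ∀ i, μ.map (V i) = ν) {g : ℕ → E → ℝ}
    (hg : ∀ j, Measurable (g j)) (hg0 : ∀ j v, 0 ≤ g j v) {M : ℝ} (hgM : ∀ j v, g j v ≤ M)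
    (N : ℕ → ℕ) {b : ℕ → ℝ} (hb0 : ∀ j, 0 ≤ b j) (hb : Summable fun j => (b j)⁻¹) {L : ℝ}
    (hmean : Tendsto (fun j => N j * (∫ v, g j v ∂ν) / b j) atTop (𝓝 L)) :
    ∀ᵐ ω ∂μ, Tendsto (fun j => (∑ i ∈ Finset.range (N j), g j (V i ω)) / b j) atTop (𝓝 L) := by
  obtain ⟨D, hD⟩ := hmean.bddAbove_range
  have hM0 : 0 ≤ M := by
    obtain ⟨ω⟩ := nonempty_of_isProbabilityMeasure μ
    exact (hg0 0 (V 0 ω)).trans (hgM 0 (V 0 ω))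
  set S : ℕ → Ω → ℝ := fun j ω => ∑ i ∈ Finset.range (N j), g j (V i ω)
  have hmem (j i : ℕ) : MemLp (fun ω => g j (V i ω)) 2 μ :=
    .of_bound ((hg j).comp (hV i)).aestronglyMeasurable M
      (ae_of_all _ fun ω => (Real.norm_of_nonneg (hg0 _ _)).trans_le (hgM _ _))
  have hS (j : ℕ) : MemLp (S j) 2 μ := memLp_finsetSum _ fun i _ => hmem j i
  have hSmean (j : ℕ) : ∫ ω, S j ω ∂μ = N j * ∫ v, g j v ∂ν := by
    have hcomp (i : ℕ) : ∫ ω, g j (V i ω) ∂μ = ∫ v, g j v ∂ν := by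
      rw [← hlaw i, integral_map (hV i).aemeasurable (hg j).aestronglyMeasurable]
    simp [S, integral_finsetSum _ fun i _ => (hmem j i).integrable one_le_two, hcomp]
  have hvar (j : ℕ) : ∫ ω, ((S j ω - ∫ x, S j x ∂μ) / b j) ^ 2 ∂μ ≤ M * D * (b j)⁻¹ := by
    simp only [div_pow]
    rw [integral_div, ← variance_eq_integral (hS j).aestronglyMeasurable.aemeasurable]
    calc Var[S j; μ] / b j ^ 2 ≤ M * (N j * ∫ v, g j v ∂ν) / b j ^ 2 := by
          gcongr
          simpa using variance_sum_comp_le hV hind hlaw (hg j) (hg0 j) (hgM j) (Finset.range (N j))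
      _ = M * (N j * (∫ v, g j v ∂ν) / b j) * (b j)⁻¹ := by ring
      _ ≤ M * D * (b j)⁻¹ := by
          have := hD ⟨j, rfl⟩
          have := hb0 j
          gcongr
  have hcentred := ae_tendsto_zero_of_summable_integral_sq (μ := μ)
    (fun j => ((hS j).sub (memLp_const (∫ x, S j x ∂μ))).mul_const (b j)⁻¹)
    (.of_nonneg_of_le (fun j => integral_nonneg fun _ => sq_nonneg _)
      (fun j => by simpa [div_eq_mul_inv] using hvar j) (hb.mul_left (M * D)))
  filter_upwards [hcentred] with ω hω
  simpa [← hSmean, ← div_eq_mul_inv, ← add_div] using hω.add hmean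

end FastLLN

section KernelConsistency

variable {Ω E X W : Type*} [MeasurableSpace Ω] [MeasurableSpace E] [MeasurableSpace X]
  {μ : Measure Ω} [IsProbabilityMeasure μ] {V : ℕ → Ω → E} {ν : Measure E}

theorem ae_tendsto_sum_cons_div (hV : ∀ i, Measurable (V i))
    (hind : iIndepFun V μ) (hlaw : ∀ i, μ.map (V i) = ν) {g : ℕ → E → ℝ}
    (hg : ∀ j, Measurable (g j)) (hg0 : ∀ j v, 0 ≤ g j v) {M : ℝ} (hgM : ∀ j v, g j v ≤ M)
    (N : ℕ → ℕ) {b : ℕ → ℝ} (hb0 : ∀ j, 0 ≤ b j) (hb : Summable fun j => (b j)⁻¹) {L : ℝ}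
    (hmean : Tendsto (fun j => N j * (∫ v, g j v ∂ν) / b j) atTop (𝓝 L)) (v : E) :
    ∀ᵐ ω ∂μ, Tendsto (fun j => (∑ i, g j (Matrix.vecCons v (fun i : Fin (N j) => V i ω) i)) / b j)
      atTop (𝓝 L) := by
  have hextra : Tendsto (fun j => g j v / b j) atTop (𝓝 0) := by
    refine squeeze_zero (fun j => div_nonneg (hg0 j v) (hb0 j)) (fun j => ?_)
      (by simpa using hb.tendsto_atTop_zero.const_mul M)
    rw [div_eq_mul_inv]
    exact mul_le_mul_of_nonneg_right (hgM j v) (inv_nonneg.2 (hb0 j))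
  filter_upwards [ae_tendsto_sum_range_div hV hind hlaw hg hg0 hgM N hb0 hb hmean] with ω hω
  simpa [Fin.sum_univ_succ, add_div, Finset.sum_range]
    using hextra.add hω

variable [NormedAddCommGroup W] [NormedSpace ℝ W] [FiniteDimensional ℝ W] [MeasurableSpace W]
  [BorelSpace W] {lam : Measure W} [lam.IsAddHaarMeasure] {ρ : Measure X} [SFinite ρ]
  {π : E → X × W} {f : X × W → ℝ} {k : W → ℝ} {h : ℕ → ℝ}

theorem HasRealDensity.ae_tendsto_kernel_sum [IsFiniteMeasure ν]
    (hd : HasRealDensity ν π (ρ.prod lam) f) (hk : IsSmoothingKernel lam k) (hkm : Measurable k)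
    (hh : IsBandwidth (Module.finrank ℝ W) h) (hV : ∀ i, Measurable (V i)) (hind : iIndepFun V μ)
    (hlaw : ∀ i, μ.map (V i) = ν) {A : Set X} (hA : MeasurableSet A) :
    ∀ᵐ w ∂lam, ∀ N : ℕ → ℕ, Tendsto N atTop atTop →
      (Summable fun j => (N j * h (N j) ^ Module.finrank ℝ W)⁻¹) → ∀ v, ∀ᵐ ω ∂μ,
        Tendsto (fun j => (∑ i : Fin (N j + 1),
          k ((h (N j))⁻¹ • (w - (π (Matrix.vecCons v (fun i : Fin (N j) => V i ω) i)).2)) *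
            A.indicator 1 (π (Matrix.vecCons v (fun i : Fin (N j) => V i ω) i)).1)
          / (N j * h (N j) ^ Module.finrank ℝ W)) atTop
          (𝓝 ((∫ u, k u ∂lam) * ∫ x in A, f (x, w) ∂ρ)) := by
  obtain ⟨M, hM⟩ := hk.bounded
  have hmarg : Integrable (fun w => ∫ x in A, f (x, w) ∂ρ) lam := by
    refine Integrable.integral_prod_right (μ := ρ.restrict A) (f := f) ?_
    rw [← Measure.restrict_univ (μ := lam), Measure.prod_restrict]
    exact hd.integrable.integrableOn
  filter_upwards [hk.ae_tendsto_average_rescale hmarg.locallyIntegrable] with w hw N hN hsum v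
  have hind0 (x : X) : 0 ≤ A.indicator (1 : X → ℝ) x :=
    Set.indicator_nonneg (fun _ _ => zero_le_one) x
  have hind1 (x : X) : A.indicator (1 : X → ℝ) x ≤ 1 :=
    Set.indicator_le_self' (f := 1) (fun _ _ => zero_le_one) x
  have hkshift (j : ℕ) : Measurable fun w' => k ((h (N j))⁻¹ • (w - w')) := by fun_prop
  refine ae_tendsto_sum_cons_div hV hind hlaw (M := M)
    (g := fun j v => k ((h (N j))⁻¹ • (w - (π v).2)) * A.indicator 1 (π v).1)
    (fun j => ((hkshift j).comp hd.measurable_fun.snd).mul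
      ((measurable_one.indicator hA).comp hd.measurable_fun.fst))
    (fun j v => mul_nonneg (hk.nonneg _) (hind0 _))
    (fun j v => (mul_le_of_le_one_right (hk.nonneg _) (hind1 _)).trans (hM _)) N
    (fun j => mul_nonneg (Nat.cast_nonneg _) (pow_pos (hh.pos _) _).le) hsum ?_ v
  refine (hw.comp (hh.tendsto_nhdsGT_zero.comp hN)).congr' ?_
  filter_upwards [hN.eventually_gt_atTop 0] with j hj
  have hj0 : (N j : ℝ) ≠ 0 := by exact_mod_cast hj.ne'
  rw [hd.integral_mul_indicator hA (hkshift j) (C := M) fun u =>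
    (abs_of_nonneg (hk.nonneg _)).trans_le (hM _), mul_div_mul_left _ _ hj0, div_eq_inv_mul]
  rfl

theorem HasRealDensity.ae_tendsto_kernelCondMeasure [IsFiniteMeasure ν]
    (hd : HasRealDensity ν π (ρ.prod lam) f) (hk : IsSmoothingKernel lam k) (hkm : Measurable k)
    (hh : IsBandwidth (Module.finrank ℝ W) h) (hV : ∀ i, Measurable (V i)) (hind : iIndepFun V μ)
    (hlaw : ∀ i, μ.map (V i) = ν) {S : Set (Set X)} (hS : S.Countable)
    (hSm : ∀ A ∈ S, MeasurableSet A) :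
    ∀ᵐ w ∂lam, 0 < ∫ x, f (x, w) ∂ρ → ∀ N : ℕ → ℕ, Tendsto N atTop atTop →
      (Summable fun j => (N j * h (N j) ^ Module.finrank ℝ W)⁻¹) → ∀ v, ∀ᵐ ω ∂μ,
        (∀ᶠ j in atTop, IsProbabilityMeasure (kernelCondMeasure k (h (N j))
          (π ∘ Matrix.vecCons v fun i : Fin (N j) => V i ω) w)) ∧
        ∀ A ∈ S, Tendsto (fun j => kernelCondMeasure k (h (N j))
          (π ∘ Matrix.vecCons v fun i : Fin (N j) => V i ω) w A) atTop (𝓝 (condLaw ρ f w A)) := by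
  have hsums := (ae_ball_iff hS).2 fun A hA =>
    hd.ae_tendsto_kernel_sum hk hkm hh hV hind hlaw (hSm A hA)
  filter_upwards [hsums, hd.ae_tendsto_kernel_sum hk hkm hh hV hind hlaw MeasurableSet.univ]
    with w hnum hden hw N hN hsum v
  filter_upwards [(ae_ball_iff hS).2 fun A hA => hnum A hA N hN hsum v, hden N hN hsum v]
    with ω hnumω hdenω
  simp only [Set.indicator_univ, Pi.one_apply, mul_one, setIntegral_univ] at hdenω
  have hlim_pos := mul_pos hk.integral_pos hw
  constructor
  · filter_upwards [hdenω.eventually_ne hlim_pos.ne'] with j hj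
    exact isProbabilityMeasure_weightedEmpirical (fun i => hk.nonneg _)
      (fun h0 => hj (div_eq_zero_iff.2 (Or.inl h0))) _
  · intro A hA
    have hratio := (hnumω A hA).div hdenω hlim_pos.ne'
    rw [mul_div_mul_left _ _ hk.integral_pos.ne'] at hratio
    rw [condLaw_apply hd.nonneg w (hSm A hA)]
    refine (ENNReal.tendsto_ofReal hratio).congr' ?_
    filter_upwards [hN.eventually_gt_atTop 0] with j hj
    have hscale : (N j * h (N j) ^ Module.finrank ℝ W : ℝ) ≠ 0 :=
      mul_ne_zero (by exact_mod_cast hj.ne') (pow_pos (hh.pos _) _).ne'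
    simp only [Pi.div_apply, div_div_div_cancel_right₀ hscale]
    exact (weightedEmpirical_apply (fun i => hk.nonneg _) _ (hSm A hA)).symm

end KernelConsistency

/-! ### The ball divergence between two kernel estimates -/

section SubsequencePrinciple

variable {Ω : Type*} [MeasurableSpace Ω] {μ : Measure Ω} [IsFiniteMeasure μ]

theorem exists_strictMono_summable_inv {b₁ b₂ : ℕ → ℝ} (hb₁ : Tendsto b₁ atTop atTop)
    (hb₂ : Tendsto b₂ atTop atTop) : ∃ φ : ℕ → ℕ, StrictMono φ ∧
      (Summable fun j => (b₁ (φ j))⁻¹) ∧ Summable fun j => (b₂ (φ j))⁻¹ := by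
  obtain ⟨φ, hφ, hlarge⟩ := extraction_forall_of_eventually fun j =>
    (hb₁.eventually_ge_atTop ((2 : ℝ) ^ j)).and (hb₂.eventually_ge_atTop ((2 : ℝ) ^ j))
  have summable_of_le {b : ℕ → ℝ} (hb : ∀ j, (2 : ℝ) ^ j ≤ b (φ j)) :
      Summable fun j => (b (φ j))⁻¹ := by
    have hpos (j : ℕ) : (0 : ℝ) < 2 ^ j := by positivity
    refine .of_nonneg_of_le (fun j => inv_nonneg.2 ((hpos j).le.trans (hb j)))
      (fun j => inv_anti₀ (hpos j) (hb j)) ?_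
    simpa only [one_div, inv_pow] using summable_geometric_two
  exact ⟨φ, hφ, summable_of_le fun j => (hlarge j).1, summable_of_le fun j => (hlarge j).2⟩

theorem tendstoInMeasure_of_ae_tendsto_of_summable_inv {F : ℕ → Ω → ℝ} {T : Ω → ℝ}
    (hF : ∀ n, AEStronglyMeasurable (F n) μ) {b₁ b₂ : ℕ → ℝ} (hb₁ : Tendsto b₁ atTop atTop)
    (hb₂ : Tendsto b₂ atTop atTop)
    (hT : ∀ N : ℕ → ℕ, Tendsto N atTop atTop → (Summable fun j => (b₁ (N j))⁻¹) →
      (Summable fun j => (b₂ (N j))⁻¹) →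
        ∀ᵐ ω ∂μ, Tendsto (fun j => F (N j) ω) atTop (𝓝 (T ω))) :
    TendstoInMeasure μ F atTop T := by
  refine (exists_seq_tendstoInMeasure_atTop_iff hF).2 fun ns hns => ?_
  obtain ⟨φ, hφ, hsum₁, hsum₂⟩ := exists_strictMono_summable_inv
    (hb₁.comp hns.tendsto_atTop) (hb₂.comp hns.tendsto_atTop)
  exact ⟨φ, hφ, hT (ns ∘ φ) (hns.comp hφ).tendsto_atTop hsum₁ hsum₂⟩

end SubsequencePrinciple

section KernelBallDiv

variable {E W₁ W₂ : Type*} {d : ℕ}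

/-- The ball divergence between two conditional laws on `ℝ^d` at the point `v`, where `πᵢ v` is
the pair of response and covariates observed by the `i`-th of them, with joint density `fᵢ`. -/
def condBallDiv (f₁ : Euc d × W₁ → ℝ) (f₂ : Euc d × W₂ → ℝ) (π₁ : E → Euc d × W₁)
    (π₂ : E → Euc d × W₂) (v : E) : ℝ :=
  ballDiv (condLaw volume f₁ (π₁ v).2) (condLaw volume f₂ (π₂ v).2)

section Bounds

variable {f₁ : Euc d × W₁ → ℝ} {f₂ : Euc d × W₂ → ℝ} {π₁ : E → Euc d × W₁} {π₂ : E → Euc d × W₂}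

theorem abs_condBallDiv_le_two (hf₁ : ∀ u, 0 ≤ f₁ u) (hf₂ : ∀ u, 0 ≤ f₂ u) (v : E) :
    |condBallDiv f₁ f₂ π₁ π₂ v| ≤ 2 :=
  abs_ballDiv_le_two (condLaw_univ_le_one hf₁ _) (condLaw_univ_le_one hf₂ _)

theorem HasRealDensity.measurable_condBallDiv [MeasurableSpace E] [MeasurableSpace W₁]
    [MeasurableSpace W₂] {ν : Measure E} {ρ₁ : Measure (Euc d × W₁)} {ρ₂ : Measure (Euc d × W₂)}
    (hd₁ : HasRealDensity ν π₁ ρ₁ f₁) (hd₂ : HasRealDensity ν π₂ ρ₂ f₂) :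
    Measurable (condBallDiv f₁ f₂ π₁ π₂) :=
  measurable_ballDiv ((measurable_condLaw hd₁.measurable_density).comp hd₁.measurable_fun.snd)
    ((measurable_condLaw hd₂.measurable_density).comp hd₂.measurable_fun.snd)
    (fun _ => condLaw_univ_le_one hd₁.nonneg _) (fun _ => condLaw_univ_le_one hd₂.nonneg _)

end Bounds

variable [AddCommGroup W₁] [Module ℝ W₁] [AddCommGroup W₂] [Module ℝ W₂]

/-- The plug-in estimate of `condBallDiv` from a finite sample: each conditional law is replaced by
its kernel estimate. -/
def kernelBallDiv (k₁ : W₁ → ℝ) (k₂ : W₂ → ℝ) (h₁ h₂ : ℝ) (π₁ : E → Euc d × W₁)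
    (π₂ : E → Euc d × W₂) {ι : Type*} [Fintype ι] (sample : ι → E) (v : E) : ℝ :=
  ballDiv (kernelCondMeasure k₁ h₁ (π₁ ∘ sample) (π₁ v).2)
    (kernelCondMeasure k₂ h₂ (π₂ ∘ sample) (π₂ v).2)

section Bounds

variable (k₁ : W₁ → ℝ) (k₂ : W₂ → ℝ) (h₁ h₂ : ℝ) (π₁ : E → Euc d × W₁) (π₂ : E → Euc d × W₂)
  {ι : Type*} [Fintype ι]

theorem kernelBallDiv_comp_equiv {κ : Type*} [Fintype κ] (e : κ ≃ ι) (sample : ι → E) (v : E) :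
    kernelBallDiv k₁ k₂ h₁ h₂ π₁ π₂ (sample ∘ e) v
      = kernelBallDiv k₁ k₂ h₁ h₂ π₁ π₂ sample v := by
  simp only [kernelBallDiv, ← Function.comp_assoc, kernelCondMeasure_comp_equiv]

theorem abs_kernelBallDiv_le_two (sample : ι → E) (v : E) :
    |kernelBallDiv k₁ k₂ h₁ h₂ π₁ π₂ sample v| ≤ 2 :=
  abs_ballDiv_le_two (kernelCondMeasure_univ_le_one _ _ _ _)
    (kernelCondMeasure_univ_le_one _ _ _ _)

theorem measurable_kernelBallDiv [MeasurableSpace E] [MeasurableSpace W₁] [MeasurableSub₂ W₁]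
    [MeasurableConstSMul ℝ W₁] [MeasurableSpace W₂] [MeasurableSub₂ W₂] [MeasurableConstSMul ℝ W₂]
    {T : Type*} [MeasurableSpace T] {k₁ : W₁ → ℝ} {k₂ : W₂ → ℝ} {π₁ : E → Euc d × W₁}
    {π₂ : E → Euc d × W₂} (hk₁ : Measurable k₁) (hk₂ : Measurable k₂)
    (hπ₁ : Measurable π₁) (hπ₂ : Measurable π₂) {sample : T → ι → E} (hsample : Measurable sample)
    {v : T → E} (hv : Measurable v) :
    Measurable fun t => kernelBallDiv k₁ k₂ h₁ h₂ π₁ π₂ (sample t) (v t) := by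
  have hpoint (i : ι) : Measurable fun t => sample t i := (measurable_pi_apply i).comp hsample
  exact measurable_ballDiv
    (measurable_kernelCondMeasure hk₁ h₁ (measurable_pi_lambda _ fun i => hπ₁.comp (hpoint i))
      (hπ₁.comp hv).snd)
    (measurable_kernelCondMeasure hk₂ h₂ (measurable_pi_lambda _ fun i => hπ₂.comp (hpoint i))
      (hπ₂.comp hv).snd)
    (fun _ => kernelCondMeasure_univ_le_one _ _ _ _)
    (fun _ => kernelCondMeasure_univ_le_one _ _ _ _)

end Bounds

end KernelBallDiv

section PointwiseConsistency

variable {Ω E W₁ W₂ : Type*} {d : ℕ} [MeasurableSpace Ω] [MeasurableSpace E]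
  [NormedAddCommGroup W₁] [NormedSpace ℝ W₁] [FiniteDimensional ℝ W₁] [MeasurableSpace W₁]
  [BorelSpace W₁] {lam₁ : Measure W₁} [lam₁.IsAddHaarMeasure]
  [NormedAddCommGroup W₂] [NormedSpace ℝ W₂] [FiniteDimensional ℝ W₂] [MeasurableSpace W₂]
  [BorelSpace W₂] {lam₂ : Measure W₂} [lam₂.IsAddHaarMeasure]
  {μ : Measure Ω} [IsProbabilityMeasure μ] {V : ℕ → Ω → E} {ν : Measure E} [IsFiniteMeasure ν]
  {π₁ : E → Euc d × W₁} {f₁ : Euc d × W₁ → ℝ} {k₁ : W₁ → ℝ} {h₁ : ℕ → ℝ}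
  {π₂ : E → Euc d × W₂} {f₂ : Euc d × W₂ → ℝ} {k₂ : W₂ → ℝ} {h₂ : ℕ → ℝ}

theorem HasRealDensity.ae_tendstoInMeasure_kernelBallDiv
    (hd₁ : HasRealDensity ν π₁ (volume.prod lam₁) f₁)
    (hd₂ : HasRealDensity ν π₂ (volume.prod lam₂) f₂)
    (hk₁ : IsSmoothingKernel lam₁ k₁) (hk₂ : IsSmoothingKernel lam₂ k₂)
    (hkm₁ : Measurable k₁) (hkm₂ : Measurable k₂)
    (hh₁ : IsBandwidth (Module.finrank ℝ W₁) h₁) (hh₂ : IsBandwidth (Module.finrank ℝ W₂) h₂)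
    (hV : ∀ i, Measurable (V i)) (hind : iIndepFun V μ) (hlaw : ∀ i, μ.map (V i) = ν) :
    ∀ᵐ v ∂ν, TendstoInMeasure μ
      (fun n ω => kernelBallDiv k₁ k₂ (h₁ n) (h₂ n) π₁ π₂
        (Matrix.vecCons v fun i : Fin n => V i ω) v)
      atTop (fun _ => condBallDiv f₁ f₂ π₁ π₂ v) := by
  obtain ⟨S, hS, hSpi, hSbasis⟩ := exists_countable_isPiSystem_isTopologicalBasis (Euc d)
  have hSm (A : Set (Euc d)) (hA : A ∈ S) : MeasurableSet A := (hSbasis.isOpen hA).measurableSet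
  have hest₁ := ae_of_ae_map hd₁.snd.measurable_fun.aemeasurable
    (hd₁.snd.map_absolutelyContinuous.ae_le
      (hd₁.ae_tendsto_kernelCondMeasure hk₁ hkm₁ hh₁ hV hind hlaw hS hSm))
  have hest₂ := ae_of_ae_map hd₂.snd.measurable_fun.aemeasurable
    (hd₂.snd.map_absolutelyContinuous.ae_le
      (hd₂.ae_tendsto_kernelCondMeasure hk₂ hkm₂ hh₂ hV hind hlaw hS hSm))
  filter_upwards [hest₁, hest₂, hd₁.snd.ae_pos, hd₂.snd.ae_pos] with v hv₁ hv₂ hpos₁ hpos₂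
  have : IsProbabilityMeasure (condLaw volume f₁ (π₁ v).2) :=
    isProbabilityMeasure_condLaw hd₁.nonneg hpos₁.ne'
  have : IsProbabilityMeasure (condLaw volume f₂ (π₂ v).2) :=
    isProbabilityMeasure_condLaw hd₂.nonneg hpos₂.ne'
  refine tendstoInMeasure_of_ae_tendsto_of_summable_inv (fun n => ?_)
    hh₁.tendsto_mul_pow hh₂.tendsto_mul_pow fun N hN hsum₁ hsum₂ => ?_
  · exact (measurable_kernelBallDiv _ _ hkm₁ hkm₂ hd₁.measurable_fun hd₂.measurable_fun
      (measurable_pi_lambda _ (Fin.cases measurable_const fun i => hV i))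
      measurable_const).aestronglyMeasurable
  · filter_upwards [hv₁ hpos₁ N hN hsum₁ v, hv₂ hpos₂ N hN hsum₂ v]
      with ω ⟨hprob₁, hlim₁⟩ ⟨hprob₂, hlim₂⟩
    exact tendsto_ballDiv (P := condLaw _ _ _) (Q := condLaw _ _ _) hSpi hSbasis
      (withDensity_absolutelyContinuous _ _) (withDensity_absolutelyContinuous _ _)
      hprob₁ hprob₂ hlim₁ hlim₂

end PointwiseConsistency

/-! ### Leave-one-out averages -/

section BoundedConvergence

variable {Ω : Type*} [MeasurableSpace Ω] {μ : Measure Ω}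

theorem unifIntegrable_of_abs_le {ι : Type*} {F : ι → Ω → ℝ}
    (hF : ∀ n, AEStronglyMeasurable (F n) μ) {C : ℝ} (hC : ∀ n ω, |F n ω| ≤ C) :
    UnifIntegrable F 1 μ := by
  refine unifIntegrable_of le_rfl ENNReal.one_ne_top hF fun ε _ => ⟨C.toNNReal + 1, fun n => ?_⟩
  have hempty : {ω | C.toNNReal + 1 ≤ ‖F n ω‖₊} = ∅ := by
    refine Set.eq_empty_of_forall_notMem fun ω hω => ?_
    have hle : (C.toNNReal + 1 : ℝ) ≤ |F n ω| := by exact_mod_cast hω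
    linarith [hC n ω, C.le_coe_toNNReal]
  simp [hempty]

theorem tendsto_eLpNorm_sub_const_of_tendstoInMeasure [IsFiniteMeasure μ] {F : ℕ → Ω → ℝ}
    (hF : ∀ n, AEStronglyMeasurable (F n) μ) {C : ℝ} (hC : ∀ n ω, |F n ω| ≤ C) {c : ℝ}
    (hlim : TendstoInMeasure μ F atTop fun _ => c) :
    Tendsto (fun n => eLpNorm (fun ω => F n ω - c) 1 μ) atTop (𝓝 0) :=
  tendsto_Lp_finite_of_tendstoInMeasure le_rfl ENNReal.one_ne_top hF (memLp_const c)
    (unifIntegrable_of_abs_le hF hC) hlim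

end BoundedConvergence

section LeaveOneOut

/-- The average over the points of a sample of size `n + 1` of the statistic `F`, which depends on
the point and on the sample of size `n` obtained by removing it. -/
def leaveOneOutAverage {E : Type*} {n : ℕ} (F : E × (Fin n → E) → ℝ) (sample : Fin (n + 1) → E) :
    ℝ :=
  ((n + 1 : ℕ) : ℝ)⁻¹ * ∑ s, F (sample s, fun i => sample (s.succAbove i))

theorem measurable_leaveOneOutAverage {E : Type*} [MeasurableSpace E] {n : ℕ}
    {F : E × (Fin n → E) → ℝ} (hF : Measurable F) : Measurable (leaveOneOutAverage F) :=
  (Finset.measurable_fun_sum _ fun s _ => hF.comp ((measurable_pi_apply s).prodMk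
    (measurable_pi_lambda _ fun i => measurable_pi_apply (s.succAbove i)))).const_mul _

variable {Ω E : Type*} [MeasurableSpace Ω] [MeasurableSpace E] {μ : Measure Ω}
  [IsProbabilityMeasure μ] {V : ℕ → Ω → E} {ν : Measure E}

theorem map_iid_tuple (hV : ∀ i, Measurable (V i)) (hind : iIndepFun V μ)
    (hlaw : ∀ i, μ.map (V i) = ν) (n : ℕ) :
    μ.map (fun ω (i : Fin n) => V i ω) = Measure.pi fun _ => ν := by
  rw [(iIndepFun_iff_map_fun_eq_pi_map (f := fun i : Fin n => V i)
    fun i => (hV i).aemeasurable).1 (hind.precomp Fin.val_injective)]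
  simp only [hlaw]

theorem lintegral_leave_one_out [SigmaFinite ν] (hV : ∀ i, Measurable (V i))
    (hind : iIndepFun V μ) (hlaw : ∀ i, μ.map (V i) = ν) {n : ℕ} {G : E × (Fin n → E) → ℝ≥0∞}
    (hG : Measurable G) (s : Fin (n + 1)) :
    ∫⁻ ω, G (V s ω, fun i => V (s.succAbove i) ω) ∂μ
      = ∫⁻ v, ∫⁻ ω, G (v, fun i : Fin n => V i ω) ∂μ ∂ν := by
  have hsplit := measurePreserving_piFinSuccAbove (fun _ : Fin (n + 1) => ν) s
  have htuple (m : ℕ) : Measurable fun ω (i : Fin m) => V i ω :=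
    measurable_pi_lambda _ fun i => hV i
  calc ∫⁻ ω, G (V s ω, fun i => V (s.succAbove i) ω) ∂μ
    _ = ∫⁻ r, G (MeasurableEquiv.piFinSuccAbove (fun _ => E) s r)
          ∂μ.map fun ω (i : Fin (n + 1)) => V i ω := by
        exact (lintegral_map
          (f := fun r => G (MeasurableEquiv.piFinSuccAbove (fun _ : Fin (n + 1) => E) s r))
          (hG.comp (MeasurableEquiv.measurable _)) (htuple (n + 1))).symm
    _ = ∫⁻ v, ∫⁻ r, G (v, r) ∂(Measure.pi fun _ : Fin n => ν) ∂ν := by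
        rw [map_iid_tuple hV hind hlaw, hsplit.lintegral_comp hG,
          lintegral_prod _ hG.aemeasurable]
    _ = ∫⁻ v, ∫⁻ ω, G (v, fun i : Fin n => V i ω) ∂μ ∂ν := by
        congr! with v
        rw [← map_iid_tuple hV hind hlaw n]
        exact lintegral_map (hG.comp measurable_prodMk_left) (htuple n)

variable [IsProbabilityMeasure ν] {F : (n : ℕ) → E × (Fin n → E) → ℝ} {T : E → ℝ} {C : ℝ}

theorem tendsto_lintegral_lintegral_enorm_sub (hV : ∀ i, Measurable (V i))
    (hF : ∀ n, Measurable (F n)) (hFC : ∀ n q, |F n q| ≤ C) (hT : Measurable T)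
    (hTC : ∀ v, |T v| ≤ C)
    (hlim : ∀ᵐ v ∂ν, TendstoInMeasure μ (fun n ω => F n (v, fun i => V i ω)) atTop fun _ => T v) :
    Tendsto (fun n => ∫⁻ v, ∫⁻ ω, ‖F n (v, fun i => V i ω) - T v‖ₑ ∂μ ∂ν) atTop (𝓝 0) := by
  have hmeas (n : ℕ) : Measurable fun q : E × Ω => F n (q.1, fun i => V i q.2) :=
    (hF n).comp (measurable_fst.prodMk
      (measurable_pi_lambda _ fun i => (hV i).comp measurable_snd))
  have hbound (n : ℕ) (v : E) (ω : Ω) :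
      ‖F n (v, fun i => V i ω) - T v‖ₑ ≤ ENNReal.ofReal (C + C) := by
    rw [Real.enorm_eq_ofReal_abs]
    exact ENNReal.ofReal_le_ofReal ((abs_sub _ _).trans (add_le_add (hFC _ _) (hTC _)))
  rw [← lintegral_zero (μ := ν)]
  refine tendsto_lintegral_of_dominated_convergence (fun _ => ENNReal.ofReal (C + C))
    (fun n => ((hmeas n).sub (hT.comp measurable_fst)).enorm.lintegral_prod_right')
    (fun n => ae_of_all _ fun v => ?_) (by simp) ?_
  · simpa using lintegral_mono (μ := μ) (hbound n v)
  · filter_upwards [hlim] with v hv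
    simpa only [eLpNorm_one_eq_lintegral_enorm, Function.comp_def]
      using tendsto_eLpNorm_sub_const_of_tendstoInMeasure
      (fun n => ((hmeas n).comp measurable_prodMk_left).aestronglyMeasurable)
      (fun n ω => hFC n _) hv

theorem eLpNorm_leaveOneOutAverage_sub_le (hV : ∀ i, Measurable (V i)) (hind : iIndepFun V μ)
    (hlaw : ∀ i, μ.map (V i) = ν) (hF : ∀ n, Measurable (F n)) (hT : Measurable T) (n : ℕ) :
    eLpNorm (fun ω => leaveOneOutAverage (F n) (fun i => V i ω)
      - ((n + 1 : ℕ) : ℝ)⁻¹ • ∑ s ∈ Finset.range (n + 1), T (V s ω)) 1 μ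
      ≤ ∫⁻ v, ∫⁻ ω, ‖F n (v, fun i => V i ω) - T v‖ₑ ∂μ ∂ν := by
  have hG : Measurable fun q : E × (Fin n → E) => F n q - T q.1 :=
    (hF n).sub (hT.comp measurable_fst)
  have hsplit (s : Fin (n + 1)) : Measurable fun ω => (V s ω, fun i => V (s.succAbove i) ω) :=
    (hV s).prodMk (measurable_pi_lambda _ fun i => hV _)
  have heq : (fun ω => leaveOneOutAverage (F n) (fun i => V i ω)
      - ((n + 1 : ℕ) : ℝ)⁻¹ • ∑ s ∈ Finset.range (n + 1), T (V s ω))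
      = ((n + 1 : ℕ) : ℝ)⁻¹ • ∑ s : Fin (n + 1),
        fun ω => F n (V s ω, fun i => V (s.succAbove i) ω) - T (V s ω) := by
    ext ω
    simp [leaveOneOutAverage, Finset.sum_range, mul_sub]
  calc _ ≤ ‖((n + 1 : ℕ) : ℝ)⁻¹‖ₑ * ∑ s : Fin (n + 1),
        eLpNorm (fun ω => F n (V s ω, fun i => V (s.succAbove i) ω) - T (V s ω)) 1 μ := by
        rw [heq, eLpNorm_const_smul]
        gcongr
        exact eLpNorm_sum_le (fun s _ => (hG.comp (hsplit s)).aestronglyMeasurable) le_rfl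
    _ = ‖((n + 1 : ℕ) : ℝ)⁻¹‖ₑ * ‖((n + 1 : ℕ) : ℝ)‖ₑ *
        ∫⁻ v, ∫⁻ ω, ‖F n (v, fun i => V i ω) - T v‖ₑ ∂μ ∂ν := by
        simp only [eLpNorm_one_eq_lintegral_enorm, lintegral_leave_one_out hV hind hlaw hG.enorm]
        rw [Finset.sum_const, Finset.card_univ, Fintype.card_fin, nsmul_eq_mul, mul_assoc,
          Real.enorm_natCast]
    _ = _ := by
        rw [← enorm_mul, inv_mul_cancel₀ (by positivity), enorm_one, one_mul]

theorem tendstoInMeasure_leaveOneOutAverage (hV : ∀ i, Measurable (V i))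
    (hind : iIndepFun V μ) (hlaw : ∀ i, μ.map (V i) = ν) (hF : ∀ n, Measurable (F n))
    (hFC : ∀ n q, |F n q| ≤ C) (hT : Measurable T) (hTC : ∀ v, |T v| ≤ C)
    (hlim : ∀ᵐ v ∂ν, TendstoInMeasure μ (fun n ω => F n (v, fun i => V i ω)) atTop fun _ => T v) :
    TendstoInMeasure μ (fun n ω => leaveOneOutAverage (F n) fun i => V i ω) atTop
      (fun _ => ∫ v, T v ∂ν) := by
  have hlln : Tendsto (fun n : ℕ => eLpNorm (fun ω =>
      ((n + 1 : ℕ) : ℝ)⁻¹ • ∑ s ∈ Finset.range (n + 1), T (V s ω) - ∫ v, T v ∂ν) 1 μ)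
      atTop (𝓝 0) := by
    have hmean : ∫ ω, T (V 0 ω) ∂μ = ∫ v, T v ∂ν := by
      rw [← hlaw 0, integral_map (hV 0).aemeasurable hT.aestronglyMeasurable]
    rw [← hmean]
    exact (tendsto_add_atTop_iff_nat 1).2 <| strong_law_Lp le_rfl ENNReal.one_ne_top
      (fun i ω => T (V i ω))
      (.of_bound (hT.comp (hV 0)).aestronglyMeasurable C (ae_of_all _ fun ω => hTC _))
      (fun i j hij => (hind.indepFun hij).comp hT hT)
      (fun i => IdentDistrib.comp
        ⟨(hV i).aemeasurable, (hV 0).aemeasurable, by simp only [hlaw]⟩ hT)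
  have hloo (n : ℕ) : Measurable fun ω => leaveOneOutAverage (F n) fun i => V i ω :=
    (measurable_leaveOneOutAverage (hF n)).comp (measurable_pi_lambda _ fun i => hV i)
  have hmean (n : ℕ) : Measurable fun ω =>
      ((n + 1 : ℕ) : ℝ)⁻¹ • ∑ s ∈ Finset.range (n + 1), T (V s ω) :=
    (Finset.measurable_fun_sum _ fun s _ => hT.comp (hV s)).const_mul _
  have hsum := (tendsto_lintegral_lintegral_enorm_sub hV hF hFC hT hTC hlim).add hlln
  rw [add_zero] at hsum
  refine tendstoInMeasure_of_tendsto_eLpNorm one_ne_zero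
    (fun n => (hloo n).aestronglyMeasurable) aestronglyMeasurable_const
    (tendsto_of_tendsto_of_tendsto_of_le_of_le tendsto_const_nhds hsum (fun _ => zero_le)
      fun n => ?_)
  have htriangle := eLpNorm_add_le ((hloo n).sub (hmean n)).aestronglyMeasurable
    ((hmean n).sub (measurable_const (a := ∫ v, T v ∂ν))).aestronglyMeasurable le_rfl (μ := μ)
  rw [sub_add_sub_cancel] at htriangle
  exact htriangle.trans
    (add_le_add_left (eLpNorm_leaveOneOutAverage_sub_le hV hind hlaw hF hT n) _)

end LeaveOneOut

/-! ### The plug-in estimator -/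

section KernelModification

theorem ae_smul_sub_of_indepFun {Ω W : Type*} [MeasurableSpace Ω] [NormedAddCommGroup W]
    [NormedSpace ℝ W] [FiniteDimensional ℝ W] [MeasurableSpace W] [BorelSpace W]
    {lam : Measure W} [lam.IsAddHaarMeasure] {μ : Measure Ω} [IsProbabilityMeasure μ]
    {U₁ U₂ : Ω → W} (hU₁ : Measurable U₁) (hU₂ : Measurable U₂) (hind : IndepFun U₁ U₂ μ)
    (hac : μ.map U₁ ≪ lam) {q : W → Prop} (hq : ∀ᵐ u ∂lam, q u) {c : ℝ} (hc : c ≠ 0) :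
    ∀ᵐ ω ∂μ, q (c • (U₁ ω - U₂ ω)) := by
  have hlaw : μ.map (fun ω => (U₁ ω, U₂ ω)) = (μ.map U₁).prod (μ.map U₂) :=
    (indepFun_iff_map_prod_eq_prod_map_map hU₁.aemeasurable hU₂.aemeasurable).1 hind
  have hqmp := (Measure.quasiMeasurePreserving_smul lam hc).comp
    (quasiMeasurePreserving_sub_of_right_invariant lam (μ.map U₂))
  refine ae_of_ae_map (f := fun ω => (U₁ ω, U₂ ω)) (p := fun u => q (c • (u.1 - u.2)))
    (hU₁.prodMk hU₂).aemeasurable ?_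
  rw [hlaw]
  exact (hac.prod Measure.AbsolutelyContinuous.rfl).ae_le (hqmp.ae hq)

theorem HasRealDensity.ae_kernelCondMeasure_eq {Ω E X W : Type*} [MeasurableSpace Ω]
    [MeasurableSpace E] [MeasurableSpace X] [NormedAddCommGroup W] [NormedSpace ℝ W]
    [FiniteDimensional ℝ W] [MeasurableSpace W] [BorelSpace W] {ρ : Measure X} [SFinite ρ]
    {lam : Measure W} [lam.IsAddHaarMeasure] {μ : Measure Ω} [IsProbabilityMeasure μ]
    {V : ℕ → Ω → E} {ν : Measure E} [IsFiniteMeasure ν] {π : E → X × W} {f : X × W → ℝ}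
    (hd : HasRealDensity ν π (ρ.prod lam) f) (hV : ∀ i, Measurable (V i)) (hind : iIndepFun V μ)
    (hlaw : ∀ i, μ.map (V i) = ν) {k k' : W → ℝ} (hk : k' =ᵐ[lam] k) (hk0 : k' 0 = k 0) {h : ℝ}
    (hh : h ≠ 0) :
    ∀ᵐ ω ∂μ, ∀ n s : ℕ, kernelCondMeasure k' h (π ∘ fun i : Fin n => V i ω) (π (V s ω)).2
      = kernelCondMeasure k h (π ∘ fun i : Fin n => V i ω) (π (V s ω)).2 := by
  have hac (s : ℕ) : μ.map (fun ω => (π (V s ω)).2) ≪ lam := by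
    have hmap := Measure.map_map hd.snd.measurable_fun (hV s) (μ := μ)
    rw [hlaw s] at hmap
    exact hmap ▸ hd.snd.map_absolutelyContinuous
  have hpair (s i : ℕ) : ∀ᵐ ω ∂μ, k' (h⁻¹ • ((π (V s ω)).2 - (π (V i ω)).2))
      = k (h⁻¹ • ((π (V s ω)).2 - (π (V i ω)).2)) := by
    rcases eq_or_ne s i with rfl | hsi
    · simp [hk0]
    · exact ae_smul_sub_of_indepFun (hd.snd.measurable_fun.comp (hV s))
        (hd.snd.measurable_fun.comp (hV i)) ((hind.indepFun hsi).comp hd.snd.measurable_fun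
          hd.snd.measurable_fun) (hac s) hk (inv_ne_zero hh)
  filter_upwards [ae_all_iff.2 fun s => ae_all_iff.2 (hpair s)] with ω hω n s
  simp only [kernelCondMeasure, Function.comp_apply, hω]

end KernelModification

theorem tendstoInMeasure_mul_const {α ι : Type*} [MeasurableSpace α] {μ : Measure α}
    {F : ι → α → ℝ} {T : α → ℝ} {l : Filter ι} (hF : TendstoInMeasure μ F l T) (c : ℝ) :
    TendstoInMeasure μ (fun i x => F i x * c) l fun x => T x * c := by
  refine fun ε hε => tendsto_of_tendsto_of_tendsto_of_le_of_le tendsto_const_nhds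
    (hF (ε / ‖c‖ₑ) (ENNReal.div_pos hε.ne' enorm_ne_top)) (fun _ => zero_le)
    fun i => measure_mono fun x hx => ENNReal.div_le_of_le_mul ?_
  rwa [edist_eq_enorm_sub, ← enorm_mul, sub_mul, ← edist_eq_enorm_sub]

section PlugInEstimator

/-- The plug-in estimator of the integral of `condBallDiv` against the weight `b`: the empirical
mean of the weighted `kernelBallDiv` over the points of the sample itself. -/
def plugInEstimator {E W₁ W₂ : Type*} {d n : ℕ} [AddCommGroup W₁] [Module ℝ W₁]
    [AddCommGroup W₂] [Module ℝ W₂] (k₁ : W₁ → ℝ) (k₂ : W₂ → ℝ) (h₁ h₂ : ℝ)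
    (π₁ : E → Euc d × W₁) (π₂ : E → Euc d × W₂) (b : E → ℝ) (sample : Fin n → E) : ℝ :=
  (n : ℝ)⁻¹ * ∑ s, kernelBallDiv k₁ k₂ h₁ h₂ π₁ π₂ sample (sample s) * b (sample s)

theorem plugInEstimator_eq_leaveOneOutAverage {E W₁ W₂ : Type*} {d n : ℕ} [AddCommGroup W₁]
    [Module ℝ W₁] [AddCommGroup W₂] [Module ℝ W₂] (k₁ : W₁ → ℝ) (k₂ : W₂ → ℝ) (h₁ h₂ : ℝ)
    (π₁ : E → Euc d × W₁) (π₂ : E → Euc d × W₂) (b : E → ℝ) (sample : Fin (n + 1) → E) :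
    plugInEstimator k₁ k₂ h₁ h₂ π₁ π₂ b sample = leaveOneOutAverage
      (fun q => kernelBallDiv k₁ k₂ h₁ h₂ π₁ π₂ (Matrix.vecCons q.1 q.2) q.1 * b q.1) sample := by
  simp only [plugInEstimator, leaveOneOutAverage]
  congr! 3 with s
  rw [← kernelBallDiv_comp_equiv k₁ k₂ h₁ h₂ π₁ π₂ s.cycleRange.symm sample,
    ← Fin.cons_removeNth_eq_comp_cycleRange_symm]
  rfl

variable {Ω E W₁ W₂ : Type*} {d : ℕ} [MeasurableSpace Ω] [MeasurableSpace E]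
  [NormedAddCommGroup W₁] [NormedSpace ℝ W₁] [FiniteDimensional ℝ W₁] [MeasurableSpace W₁]
  [BorelSpace W₁] {lam₁ : Measure W₁} [lam₁.IsAddHaarMeasure]
  [NormedAddCommGroup W₂] [NormedSpace ℝ W₂] [FiniteDimensional ℝ W₂] [MeasurableSpace W₂]
  [BorelSpace W₂] {lam₂ : Measure W₂} [lam₂.IsAddHaarMeasure]
  {μ : Measure Ω} [IsProbabilityMeasure μ] {V : ℕ → Ω → E} {ν : Measure E} [IsProbabilityMeasure ν]
  {π₁ : E → Euc d × W₁} {f₁ : Euc d × W₁ → ℝ} {k₁ : W₁ → ℝ} {h₁ : ℕ → ℝ}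
  {π₂ : E → Euc d × W₂} {f₂ : Euc d × W₂ → ℝ} {k₂ : W₂ → ℝ} {h₂ : ℕ → ℝ} {b : E → ℝ} {C : ℝ}

theorem tendstoInMeasure_plugInEstimator_of_measurable
    (hd₁ : HasRealDensity ν π₁ (volume.prod lam₁) f₁)
    (hd₂ : HasRealDensity ν π₂ (volume.prod lam₂) f₂)
    (hk₁ : IsSmoothingKernel lam₁ k₁) (hk₂ : IsSmoothingKernel lam₂ k₂)
    (hkm₁ : Measurable k₁) (hkm₂ : Measurable k₂)
    (hh₁ : IsBandwidth (Module.finrank ℝ W₁) h₁) (hh₂ : IsBandwidth (Module.finrank ℝ W₂) h₂)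
    (hb : Measurable b) (hbC : ∀ v, |b v| ≤ C)
    (hV : ∀ i, Measurable (V i)) (hind : iIndepFun V μ) (hlaw : ∀ i, μ.map (V i) = ν) :
    TendstoInMeasure μ
      (fun n ω => plugInEstimator k₁ k₂ (h₁ n) (h₂ n) π₁ π₂ b fun i : Fin n => V i ω)
      atTop (fun _ => ∫ v, condBallDiv f₁ f₂ π₁ π₂ v * b v ∂ν) := by
  have abs_mul_le {D : ℝ} (hD : |D| ≤ 2) (v : E) : |D * b v| ≤ 2 * C := by
    rw [abs_mul]
    exact mul_le_mul hD (hbC v) (abs_nonneg _) zero_le_two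
  have hlim := tendstoInMeasure_leaveOneOutAverage hV hind hlaw
    (F := fun n q => kernelBallDiv k₁ k₂ (h₁ (n + 1)) (h₂ (n + 1)) π₁ π₂
      (Matrix.vecCons q.1 q.2) q.1 * b q.1)
    (T := fun v => condBallDiv f₁ f₂ π₁ π₂ v * b v)
    (fun n => (measurable_kernelBallDiv _ _ hkm₁ hkm₂ hd₁.measurable_fun hd₂.measurable_fun
      (measurable_pi_lambda _ (Fin.cases measurable_fst fun i =>
        (measurable_pi_apply i).comp measurable_snd)) measurable_fst).mul (hb.comp measurable_fst))
    (fun n q => abs_mul_le (abs_kernelBallDiv_le_two _ _ _ _ _ _ _ _) _)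
    ((hd₁.measurable_condBallDiv hd₂).mul hb)
    (fun v => abs_mul_le (abs_condBallDiv_le_two hd₁.nonneg hd₂.nonneg v) v)
    (by
      filter_upwards [hd₁.ae_tendstoInMeasure_kernelBallDiv hd₂ hk₁ hk₂ hkm₁ hkm₂ hh₁.comp_succ
        hh₂.comp_succ hV hind hlaw] with v hv
      exact tendstoInMeasure_mul_const hv (b v))
  exact fun ε hε => (tendsto_add_atTop_iff_nat 1).1 <| by
    simpa only [plugInEstimator_eq_leaveOneOutAverage] using hlim ε hε

theorem tendstoInMeasure_plugInEstimator
    (hd₁ : HasRealDensity ν π₁ (volume.prod lam₁) f₁)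
    (hd₂ : HasRealDensity ν π₂ (volume.prod lam₂) f₂)
    (hk₁ : IsSmoothingKernel lam₁ k₁) (hk₂ : IsSmoothingKernel lam₂ k₂)
    (hh₁ : IsBandwidth (Module.finrank ℝ W₁) h₁) (hh₂ : IsBandwidth (Module.finrank ℝ W₂) h₂)
    (hb : Measurable b) (hbC : ∀ v, |b v| ≤ C)
    (hV : ∀ i, Measurable (V i)) (hind : iIndepFun V μ) (hlaw : ∀ i, μ.map (V i) = ν) :
    TendstoInMeasure μ
      (fun n ω => plugInEstimator k₁ k₂ (h₁ n) (h₂ n) π₁ π₂ b fun i : Fin n => V i ω)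
      atTop (fun _ => ∫ v, condBallDiv f₁ f₂ π₁ π₂ v * b v ∂ν) := by
  obtain ⟨k₁', hkm₁, hk₁', hke₁, hk0₁⟩ := hk₁.exists_measurable_ae_eq 0
  obtain ⟨k₂', hkm₂, hk₂', hke₂, hk0₂⟩ := hk₂.exists_measurable_ae_eq 0
  refine (tendstoInMeasure_plugInEstimator_of_measurable hd₁ hd₂ hk₁' hk₂' hkm₁ hkm₂ hh₁ hh₂ hb hbC
    hV hind hlaw).congr_left fun n => ?_
  filter_upwards [hd₁.ae_kernelCondMeasure_eq hV hind hlaw hke₁ hk0₁ (hh₁.pos n).ne',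
    hd₂.ae_kernelCondMeasure_eq hV hind hlaw hke₂ hk0₂ (hh₂.pos n).ne'] with ω hω₁ hω₂
  simp only [plugInEstimator, kernelBallDiv, hω₁ n, hω₂ n]

end PlugInEstimator

/-! ### The sample of triples -/

section EuclideanCovariates

variable {dX dY dZ : ℕ}

theorem exists_measurePreserving_homeomorph_euc_add (dY dZ : ℕ) :
    ∃ e : Euc dY × Euc dZ ≃ₜ Euc (dY + dZ), MeasurePreserving e ∧
      ∀ w, ‖e w‖ = √(‖w.1‖ ^ 2 + ‖w.2‖ ^ 2) := by
  let e : WithLp 2 (Euc dY × Euc dZ) ≃ₗᵢ[ℝ] Euc (dY + dZ) :=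
    (PiLp.sumPiLpEquivProdLpPiLp (p := 2) (𝕜 := ℝ)
      (α := fun _ : Fin dY ⊕ Fin dZ => ℝ)).symm.trans
      (LinearIsometryEquiv.piLpCongrLeft 2 ℝ ℝ finSumFinEquiv)
  refine ⟨(WithLp.homeomorphProd 2 (Euc dY) (Euc dZ)).symm.trans e.toHomeomorph,
    e.measurePreserving.comp (WithLp.volume_preserving_toLp (Euc dY) (Euc dZ)), fun w => ?_⟩
  exact (e.norm_map _).trans (WithLp.prod_norm_eq_of_L2 _)

theorem IsSmoothingKernel.comp_sqrt_add_sq {K : ℝ → ℝ}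
    (hK : IsSmoothingKernel volume fun u : Euc (dY + dZ) => K ‖u‖) :
    IsSmoothingKernel volume
      fun w : Euc dY × Euc dZ => K √(‖w.1‖ ^ 2 + ‖w.2‖ ^ 2) := by
  obtain ⟨e, he, hnorm⟩ := exists_measurePreserving_homeomorph_euc_add dY dZ
  simpa only [Function.comp_def, hnorm] using hK.comp_homeomorph e he

theorem wYZ_eq (K : ℝ → ℝ) {h : ℝ} (hh : 0 < h) (y y' : Euc dY) (z z' : Euc dZ) :
    wYZ K h y y' z z' = K √(‖(h⁻¹ • (y - y'))‖ ^ 2 + ‖h⁻¹ • (z - z')‖ ^ 2) := by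
  rw [wYZ, norm_smul, norm_smul, mul_pow, mul_pow, ← mul_add, Real.sqrt_mul (by positivity),
    Real.sqrt_sq (norm_nonneg _), Real.norm_of_nonneg (inv_nonneg.2 hh.le), inv_mul_eq_div,
    dist_eq_norm, dist_eq_norm]

theorem condEstYZ_eq_kernelCondMeasure (K : ℝ → ℝ) {h : ℝ} (hh : 0 < h) (n : ℕ)
    (xs : ℕ → Euc dX) (ys : ℕ → Euc dY) (zs : ℕ → Euc dZ) (y : Euc dY) (z : Euc dZ) :
    condEstYZ K h n xs ys zs y z
      = kernelCondMeasure (fun w : Euc dY × Euc dZ => K √(‖w.1‖ ^ 2 + ‖w.2‖ ^ 2)) h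
        (fun i : Fin n => (xs i, ys i, zs i)) (y, z) := by
  simp only [condEstYZ, kernelCondMeasure, weightedEmpirical, wYZ_eq K hh, Finset.sum_range,
    Prod.mk_sub_mk, Prod.smul_mk]

theorem condEstZ_eq_kernelCondMeasure (K : ℝ → ℝ) {h : ℝ} (hh : 0 < h) (n : ℕ)
    (xs : ℕ → Euc dX) (zs : ℕ → Euc dZ) (z : Euc dZ) :
    condEstZ K h n xs zs z
      = kernelCondMeasure (fun w => K ‖w‖) h (fun i : Fin n => (xs i, zs i)) z := by
  simp only [condEstZ, kernelCondMeasure, weightedEmpirical, Finset.sum_range, norm_smul,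
    Real.norm_of_nonneg (inv_nonneg.2 hh.le), inv_mul_eq_div, dist_eq_norm]

theorem plugInEstimator_triples (K₁ K₂ : ℝ → ℝ) {h₁ h₂ : ℝ} (hh₁ : 0 < h₁) (hh₂ : 0 < h₂)
    (a : Euc dY → Euc dZ → ℝ) (n : ℕ) (xs : ℕ → Euc dX) (ys : ℕ → Euc dY) (zs : ℕ → Euc dZ) :
    plugInEstimator (fun w : Euc dY × Euc dZ => K₁ √(‖w.1‖ ^ 2 + ‖w.2‖ ^ 2)) (fun w => K₂ ‖w‖)
      h₁ h₂ (fun v => v) (fun v => (v.1, v.2.2)) (fun v => a v.2.1 v.2.2)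
      (fun i : Fin n => (xs i, ys i, zs i))
    = (n : ℝ)⁻¹ * ∑ s ∈ Finset.range n,
      ballDiv (condEstYZ K₁ h₁ n xs ys zs (ys s) (zs s)) (condEstZ K₂ h₂ n xs zs (zs s))
        * a (ys s) (zs s) := by
  simp only [plugInEstimator, kernelBallDiv, condEstYZ_eq_kernelCondMeasure K₁ hh₁,
    condEstZ_eq_kernelCondMeasure K₂ hh₂, Finset.sum_range, Function.comp_def]

theorem integral_condBallDiv_mul {p : Euc dX → Euc dY → Euc dZ → ℝ}
    {ν : Measure (Euc dX × Euc dY × Euc dZ)} [IsFiniteMeasure ν]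
    (hd : HasRealDensity ν (fun v => v) (volume.prod (volume.prod volume))
      fun v => p v.1 v.2.1 v.2.2)
    {a : Euc dY → Euc dZ → ℝ} (ha : Measurable fun w : Euc dY × Euc dZ => a w.1 w.2) {C : ℝ}
    (hC : ∀ y z, |a y z| ≤ C) :
    ∫ v, condBallDiv (fun u : Euc dX × Euc dY × Euc dZ => p u.1 u.2.1 u.2.2)
      (fun u : Euc dX × Euc dZ => ∫ y, p u.1 y u.2) (fun v => v) (fun v => (v.1, v.2.2)) v
        * a v.2.1 v.2.2 ∂ν
      = ∫ y, ∫ z, ballDiv (condAtYZ p y z) (condAtZ p z) * a y z * margYZ p y z := by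
  let g : Euc dY × Euc dZ → ℝ := fun w =>
    ballDiv (condAtYZ p w.1 w.2) (condAtZ p w.2) * a w.1 w.2
  have hdZ : HasRealDensity ν (fun v => (v.1, v.2.2)) (volume.prod volume)
      fun u : Euc dX × Euc dZ => ∫ y, p u.1 y u.2 := hd.fst_snd_snd
  have hYZ : HasRealDensity ν (fun v => v.2) (volume.prod volume)
      fun w => margYZ p w.1 w.2 := hd.snd
  have hg : Measurable g :=
    (measurable_ballDiv (measurable_condLaw hd.measurable_density)
      ((measurable_condLaw hdZ.measurable_density).comp measurable_snd)
      (fun _ => condLaw_univ_le_one hd.nonneg _) fun _ => condLaw_univ_le_one hdZ.nonneg _).mul ha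
  have hgC (w : Euc dY × Euc dZ) : ‖g w‖ ≤ 2 * C := by
    have hdiv : |ballDiv (condAtYZ p w.1 w.2) (condAtZ p w.2)| ≤ 2 :=
      abs_ballDiv_le_two (condLaw_univ_le_one hd.nonneg w) (condLaw_univ_le_one hdZ.nonneg w.2)
    rw [Real.norm_eq_abs, abs_mul]
    exact mul_le_mul hdiv (hC _ _) (abs_nonneg _) zero_le_two
  refine (hYZ.integral_comp hg).trans ?_
  simp only [mul_comm (margYZ p _ _)]
  exact integral_prod _ (hYZ.integrable.bdd_mul hg.aestronglyMeasurable (ae_of_all _ hgC))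

end EuclideanCovariates

section Assumptions

theorem KernelAssumption.isSmoothingKernel {K : ℝ → ℝ} {d : ℕ} (hK : KernelAssumption K d) :
    IsSmoothingKernel volume fun u : Euc d => K ‖u‖ := by
  obtain ⟨hnonneg, ⟨M, hM⟩, -, ⟨R, -, hR⟩, hint, -⟩ := hK
  refine ⟨fun u => hnonneg _, ⟨M, fun u => hM _⟩, ?_, hint ▸ one_pos⟩
  refine HasCompactSupport.intro (isCompact_closedBall 0 R) fun u hu => hR _ ?_
  simpa using hu

variable {dY dZ : ℕ} {h₁ h₂ : ℕ → ℝ}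

theorem BandwidthAssumption.isBandwidth_left (hh : BandwidthAssumption dY dZ h₁ h₂) :
    IsBandwidth (dY + dZ) h₁ :=
  .of_tendsto_mul_pow_add hh.1 four_ne_zero hh.2.2.2.1 hh.2.2.2.2.2.1

theorem BandwidthAssumption.isBandwidth_right (hh : BandwidthAssumption dY dZ h₁ h₂) :
    IsBandwidth dZ h₂ :=
  .of_tendsto_mul_pow_add hh.2.1 four_ne_zero hh.2.2.2.2.1 hh.2.2.2.2.2.2

end Assumptions

theorem condBallDiv_estimator_consistent_general {dX dY dZ : ℕ} {Ω : Type*} [MeasurableSpace Ω]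
    (μ : Measure Ω) [IsProbabilityMeasure μ]
    (Xs : ℕ → Ω → Euc dX) (Ys : ℕ → Ω → Euc dY) (Zs : ℕ → Ω → Euc dZ)
    (hmeas : ∀ i, Measurable fun ω => (Xs i ω, Ys i ω, Zs i ω))
    (p : Euc dX → Euc dY → Euc dZ → ℝ)
    (hp_meas : Measurable fun v : Euc dX × Euc dY × Euc dZ => p v.1 v.2.1 v.2.2)
    (hp_nonneg : ∀ x y z, 0 ≤ p x y z)
    (hiid : iIndepFun (fun i ω => (Xs i ω, Ys i ω, Zs i ω)) μ)
    (hlaw : ∀ i, μ.map (fun ω => (Xs i ω, Ys i ω, Zs i ω))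
      = volume.withDensity fun v => ENNReal.ofReal (p v.1 v.2.1 v.2.2))
    {K₁ K₂ : ℝ → ℝ} (hK₁ : IsSmoothingKernel volume fun u : Euc (dY + dZ) => K₁ ‖u‖)
    (hK₂ : IsSmoothingKernel volume fun u : Euc dZ => K₂ ‖u‖)
    {h₁ h₂ : ℕ → ℝ} (hh₁ : IsBandwidth (dY + dZ) h₁) (hh₂ : IsBandwidth dZ h₂)
    (a : Euc dY → Euc dZ → ℝ) (ha_meas : Measurable fun w : Euc dY × Euc dZ => a w.1 w.2)
    (ha_bdd : ∃ C : ℝ, ∀ y z, |a y z| ≤ C) :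
    TendstoInMeasure μ
      (fun (n : ℕ) ω => (n : ℝ)⁻¹ * ∑ s ∈ Finset.range n,
        ballDiv
          (condEstYZ K₁ (h₁ n) n (fun i => Xs i ω) (fun i => Ys i ω) (fun i => Zs i ω)
            (Ys s ω) (Zs s ω))
          (condEstZ K₂ (h₂ n) n (fun i => Xs i ω) (fun i => Zs i ω) (Zs s ω))
          * a (Ys s ω) (Zs s ω))
      atTop
      (fun _ => ∫ y, ∫ z, ballDiv (condAtYZ p y z) (condAtZ p z) * a y z * margYZ p y z) := by
  obtain ⟨C, hC⟩ := ha_bdd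
  set ν : Measure (Euc dX × Euc dY × Euc dZ) :=
    volume.withDensity fun v => ENNReal.ofReal (p v.1 v.2.1 v.2.2)
  have : IsProbabilityMeasure ν := hlaw 0 ▸ Measure.isProbabilityMeasure_map (hmeas 0).aemeasurable
  have hd : HasRealDensity ν (fun v => v) (volume.prod (volume.prod volume))
      fun v => p v.1 v.2.1 v.2.2 :=
    ⟨measurable_id, hp_meas, fun _ => hp_nonneg _ _ _, Measure.map_id⟩
  have hdZ : HasRealDensity ν (fun v => (v.1, v.2.2)) (volume.prod volume)
      fun u : Euc dX × Euc dZ => ∫ y, p u.1 y u.2 := hd.fst_snd_snd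
  have hlim := tendstoInMeasure_plugInEstimator (b := fun v => a v.2.1 v.2.2) hd hdZ
    hK₁.comp_sqrt_add_sq hK₂ (by simpa using hh₁) (by simpa using hh₂)
    (ha_meas.comp measurable_snd) (fun _ => hC _ _) hmeas hiid hlaw
  rw [integral_condBallDiv_mul hd ha_meas hC] at hlim
  refine hlim.congr_left fun n => ae_of_all _ fun ω => ?_
  exact plugInEstimator_triples K₁ K₂ (hh₁.pos n) (hh₂.pos n) a n (fun i => Xs i ω)
    (fun i => Ys i ω) (fun i => Zs i ω)

/-- **Theorem 1, consistency.** Under (A1)-(A3), the kernel-averaged estimator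
`ζ̂_{a,n} = n⁻¹ ∑_{s} Θ²(P̃_{X|Y_s,Z_s}, P̃_{X|Z_s}) a(Y_s, Z_s)` converges in probability to the
conditional ball divergence `ζ_a(X, Y | Z) = E[Θ²(P_{X|Y,Z}, P_{X|Z}) a(Y, Z)]`. -/
theorem condBallDiv_estimator_consistent
    {dX dY dZ : ℕ} {Ω : Type} [MeasurableSpace Ω]
    (μ : Measure Ω) [IsProbabilityMeasure μ]
    -- i.i.d. samples from the joint density `p`
    (Xs : ℕ → Ω → Euc dX) (Ys : ℕ → Ω → Euc dY) (Zs : ℕ → Ω → Euc dZ)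
    (hmeas : ∀ i, Measurable fun ω => (Xs i ω, Ys i ω, Zs i ω))
    (p : Euc dX → Euc dY → Euc dZ → ℝ)
    (hp_meas : Measurable fun v : Euc dX × Euc dY × Euc dZ => p v.1 v.2.1 v.2.2)
    (hp_nonneg : ∀ x y z, 0 ≤ p x y z)
    (hiid : iIndepFun (fun i ω => (Xs i ω, Ys i ω, Zs i ω)) μ)
    (hlaw : ∀ i, μ.map (fun ω => (Xs i ω, Ys i ω, Zs i ω))
      = volume.withDensity fun v => ENNReal.ofReal (p v.1 v.2.1 v.2.2))
    -- assumptions (A1), (A2), (A3)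
    (hA1 : A1 p)
    (K : ℝ → ℝ) (hK1 : KernelAssumption K (dY + dZ)) (hK2 : KernelAssumption K dZ)
    (h1 h2 : ℕ → ℝ) (hA3 : BandwidthAssumption dY dZ h1 h2)
    -- the weight function: bounded, measurable, nonnegative, positive on the support of `p_{Y,Z}`
    (a : Euc dY → Euc dZ → ℝ)
    (ha_meas : Measurable fun w : Euc dY × Euc dZ => a w.1 w.2)
    (ha_nonneg : ∀ y z, 0 ≤ a y z) (ha_bdd : ∃ C : ℝ, ∀ y z, a y z ≤ C)
    (ha_pos : ∀ y z, 0 < margYZ p y z → 0 < a y z) :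
    TendstoInMeasure μ
      (fun (n : ℕ) ω => (n : ℝ)⁻¹ * ∑ s ∈ Finset.range n,
        ballDiv
          (condEstYZ K (h1 n) n (fun i => Xs i ω) (fun i => Ys i ω) (fun i => Zs i ω)
            (Ys s ω) (Zs s ω))
          (condEstZ K (h2 n) n (fun i => Xs i ω) (fun i => Zs i ω) (Zs s ω))
          * a (Ys s ω) (Zs s ω))
      atTop
      (fun _ => ∫ y, ∫ z, ballDiv (condAtYZ p y z) (condAtZ p z) * a y z * margYZ p y z) := by
  obtain ⟨C, hC⟩ := ha_bdd
  exact condBallDiv_estimator_consistent_general μ Xs Ys Zs hmeas p hp_meas hp_nonneg hiid hlaw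
    hK1.isSmoothingKernel hK2.isSmoothingKernel hA3.isBandwidth_left hA3.isBandwidth_right a ha_meas
    ⟨C, fun y z => (abs_of_nonneg (ha_nonneg y z)).trans_le (hC y z)⟩

end
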